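/- arXiv:2209.14979 — 5 statements merged into one kernel-verified Lean document; each statement's English description precedes it below -/
import Mathlib

section
/- Let Spin(9) be the subgroup of the group of ℝ-linear automorphisms of 𝕆 ⊕ 𝕆 generated by the operators g_{r,x}(y₀, y₁) := (r·y₀ + y₁x, y₀x̄ − r·y₁), where r ∈ ℝ, x ∈ 𝕆 and r² + ‖x‖² = 1. Then every element of Spin(9) is a linear isometry of 𝕆 ⊕ 𝕆 (with the direct-sum inner product), and Spin(9) acts transitively on the unit sphere: for all p, q ∈ 𝕆 ⊕ 𝕆 with ‖p‖ = ‖q‖ = 1 there exists g ∈ Spin(9) with g(p) = q. -/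
open scoped InnerProductSpace

/-!
Polarizing `‖xy‖ = ‖x‖‖y‖` shows that multiplication by `x̄` is adjoint to multiplication by `x`,
whence `(yx̄)x = ‖x‖² y` and `x(x̄y) = ‖x‖² y`. The first identity makes each generator
`g_{r,x}` a self-adjoint involution, hence an isometry. The second solves `u x̄ = b` for a unit
vector `u` by `x̄ = ūb`. So if `(a, b)` is a unit vector and `a = ‖a‖u` with `‖u‖ = 1`, the
generator with `r = ‖a‖` and `x̄ = ūb` moves `(a, b)` to some `(c, 0)`; the generators `g_{0,c}` and
`g_{0,1}` then move `(c, 0)` to `(0, 1)` and on to `(1, 0)`.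
-/

open WithLp

section Polarization

variable {E F G : Type*} [SeminormedAddCommGroup E] [InnerProductSpace ℝ E]
  [SeminormedAddCommGroup F] [InnerProductSpace ℝ F]
  [SeminormedAddCommGroup G] [InnerProductSpace ℝ G]

theorem inner_map_map_of_norm_map_eq_mul {f : E →ₗ[ℝ] F} {c : ℝ} (hf : ∀ x, ‖f x‖ = ‖x‖ * c)
    (x y : E) : ⟪f x, f y⟫_ℝ = ⟪x, y⟫_ℝ * c ^ 2 := by
  simp only [real_inner_eq_norm_add_mul_self_sub_norm_mul_self_sub_norm_mul_self_div_two,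
    ← map_add, hf]
  ring

theorem inner_map₂_add_inner_map₂_swap {β : E →ₗ[ℝ] F →ₗ[ℝ] G}
    (hβ : ∀ x y, ‖β x y‖ = ‖x‖ * ‖y‖) (a c : E) (b d : F) :
    ⟪β a b, β c d⟫_ℝ + ⟪β a d, β c b⟫_ℝ = 2 * ⟪a, c⟫_ℝ * ⟪b, d⟫_ℝ := by
  have polarize (y : F) : ⟪β a y, β c y⟫_ℝ = ⟪a, c⟫_ℝ * ‖y‖ ^ 2 :=
    inner_map_map_of_norm_map_eq_mul (f := β.flip y) (fun x => hβ x y) a c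
  have h := polarize (b + d)
  simp only [map_add, inner_add_left, inner_add_right, polarize, norm_add_sq_real] at h
  linarith

end Polarization

theorem apply_smul_smul_of_mem_closure {G X α : Type*} [Group G] [MulAction G X] {S : Set G}
    {B : X → X → α} (hS : ∀ g ∈ S, ∀ x y, B (g • x) (g • y) = B x y) {g : G}
    (hg : g ∈ Subgroup.closure S) (x y : X) : B (g • x) (g • y) = B x y := by
  induction hg using Subgroup.closure_induction generalizing x y with
  | mem g hg => exact hS g hg x y
  | one => simp only [one_smul]
  | mul g k _ _ hg hk => simp only [mul_smul, hg, hk]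
  | inv g _ hg => rw [← hg, smul_inv_smul, smul_inv_smul]

theorem exists_norm_eq_one_and_norm_smul_eq {E : Type*} [NormedAddCommGroup E] [NormedSpace ℝ E]
    [Nontrivial E] (a : E) : ∃ u : E, ‖u‖ = 1 ∧ ‖a‖ • u = a := by
  rcases eq_or_ne a 0 with rfl | ha
  · obtain ⟨u, hu⟩ := exists_norm_eq E zero_le_one
    exact ⟨u, hu, by rw [norm_zero, zero_smul]⟩
  · exact ⟨NormedSpace.normalize a, NormedSpace.norm_normalize_eq_one_iff.2 ha,
      NormedSpace.norm_smul_normalize a⟩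

section UnitalComposition

variable {O : Type*} [NormedAddCommGroup O] [InnerProductSpace ℝ O]

/-- Conjugation `x ↦ x̄` of a unital composition algebra with unit `e`, encoded as the
reflection in the line `ℝe`: it fixes the real part and negates the imaginary part. -/
noncomputable def unitConj (e : O) : O ≃ₗᵢ[ℝ] O := (ℝ ∙ e).reflection

@[simp]
theorem unitConj_unitConj (e x : O) : unitConj e (unitConj e x) = x :=
  Submodule.reflection_reflection _ x

theorem unitConj_apply {e : O} (he : ‖e‖ = 1) (x : O) :
    unitConj e x = (2 * ⟪x, e⟫_ℝ) • e - x := by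
  rw [unitConj, Submodule.reflection_singleton_apply, real_inner_comm, he]
  module

/-- The bilinear multiplication `mul` makes the inner product space `O` a unital composition
algebra with unit `e`; associativity is not assumed. -/
structure IsUnitalComposition (mul : O →ₗ[ℝ] O →ₗ[ℝ] O) (e : O) : Prop where
  norm_unit : ‖e‖ = 1
  unit_mul (x : O) : mul e x = x
  mul_unit (x : O) : mul x e = x
  norm_mul (x y : O) : ‖mul x y‖ = ‖x‖ * ‖y‖

/-- The operator `g_{r,x}(y₀, y₁) = (r y₀ + y₁x, y₀x̄ - r y₁)` on `O ⊕ O`, for the multiplication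
`mul` with unit `e`. It generates the spin group when `r² + ‖x‖² = 1`. -/
noncomputable def spinMap (mul : O →ₗ[ℝ] O →ₗ[ℝ] O) (e : O) (r : ℝ) (x : O) :
    O × O →ₗ[ℝ] O × O :=
  (r • LinearMap.fst ℝ O O + mul.flip x ∘ₗ LinearMap.snd ℝ O O).prod
    (mul.flip (unitConj e x) ∘ₗ LinearMap.fst ℝ O O - r • LinearMap.snd ℝ O O)

theorem spinMap_apply (mul : O →ₗ[ℝ] O →ₗ[ℝ] O) (e : O) (r : ℝ) (x : O) (y : O × O) :
    spinMap mul e r x y = (r • y.1 + mul y.2 x, mul y.1 (unitConj e x) - r • y.2) :=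
  rfl

/-- The group generated by the operators `g_{r,x}` with `r² + ‖x‖² = 1`, as a subgroup of the
linear automorphisms of `O ⊕ O`; it is `Spin(9)` when `O` is the algebra of octonions. -/
def spinSubgroup (mul : O →ₗ[ℝ] O →ₗ[ℝ] O) (e : O) : Subgroup ((O × O) ≃ₗ[ℝ] (O × O)) :=
  Subgroup.closure {g | ∃ (r : ℝ) (x : O), r ^ 2 + ‖x‖ ^ 2 = 1 ∧ ∀ y, g y = spinMap mul e r x y}

namespace IsUnitalComposition

variable {mul : O →ₗ[ℝ] O →ₗ[ℝ] O} {e : O}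

theorem flip (h : IsUnitalComposition mul e) : IsUnitalComposition mul.flip e where
  norm_unit := h.norm_unit
  unit_mul := h.mul_unit
  mul_unit := h.unit_mul
  norm_mul x y := (h.norm_mul y x).trans (mul_comm _ _)

theorem nontrivial (h : IsUnitalComposition mul e) : Nontrivial O :=
  nontrivial_of_ne e 0 (norm_ne_zero_iff.1 (h.norm_unit ▸ one_ne_zero))

theorem inner_mul_conj_left (h : IsUnitalComposition mul e) (a b c : O) :
    ⟪mul a (unitConj e b), c⟫_ℝ = ⟪a, mul c b⟫_ℝ := by
  have hswap := inner_map₂_add_inner_map₂_swap h.norm_mul a c b e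
  simp only [h.mul_unit] at hswap
  rw [unitConj_apply h.norm_unit, map_sub, map_smul, h.mul_unit, inner_sub_left,
    real_inner_smul_left]
  linarith

theorem mul_conj_mul (h : IsUnitalComposition mul e) (a x : O) :
    mul (mul a (unitConj e x)) x = ‖x‖ ^ 2 • a := by
  refine ext_inner_right ℝ fun c => ?_
  calc ⟪mul (mul a (unitConj e x)) x, c⟫_ℝ
      = ⟪mul a (unitConj e x), mul c (unitConj e x)⟫_ℝ := by
        rw [← h.inner_mul_conj_left, unitConj_unitConj]
    _ = ⟪a, c⟫_ℝ * ‖unitConj e x‖ ^ 2 :=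
        inner_map_map_of_norm_map_eq_mul (f := mul.flip (unitConj e x))
          (fun y => h.norm_mul y _) a c
    _ = ⟪‖x‖ ^ 2 • a, c⟫_ℝ := by
        rw [LinearIsometryEquiv.norm_map, real_inner_smul_left, mul_comm]

theorem mul_mul_conj (h : IsUnitalComposition mul e) (a x : O) :
    mul (mul a x) (unitConj e x) = ‖x‖ ^ 2 • a := by
  simpa using h.mul_conj_mul a (unitConj e x)

theorem mul_conj_mul_left (h : IsUnitalComposition mul e) (x a : O) :
    mul x (mul (unitConj e x) a) = ‖x‖ ^ 2 • a :=
  h.flip.mul_conj_mul a x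

theorem mul_conj_self (h : IsUnitalComposition mul e) (x : O) :
    mul x (unitConj e x) = ‖x‖ ^ 2 • e := by
  simpa only [h.unit_mul] using h.mul_mul_conj e x

theorem involutive_spinMap (h : IsUnitalComposition mul e) {r : ℝ} {x : O}
    (hrx : r ^ 2 + ‖x‖ ^ 2 = 1) : Function.Involutive (spinMap mul e r x) := by
  intro y
  have hx : ‖x‖ ^ 2 = 1 - r ^ 2 := by linarith
  ext
  · simp only [spinMap_apply, map_sub, map_smul, LinearMap.sub_apply, LinearMap.smul_apply,
      h.mul_conj_mul, hx]
    module
  · simp only [spinMap_apply, map_add, map_smul, LinearMap.add_apply, LinearMap.smul_apply,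
      h.mul_mul_conj, hx]
    module

theorem inner_spinMap_left (h : IsUnitalComposition mul e) (r : ℝ) (x : O) (p q : O × O) :
    ⟪toLp 2 (spinMap mul e r x p), toLp 2 q⟫_ℝ = ⟪toLp 2 p, toLp 2 (spinMap mul e r x q)⟫_ℝ := by
  have hadj : ⟪mul p.2 x, q.1⟫_ℝ = ⟪p.2, mul q.1 (unitConj e x)⟫_ℝ := by
    rw [← h.inner_mul_conj_left, unitConj_unitConj]
  simp only [prod_inner_apply, spinMap_apply, inner_add_left, inner_add_right, inner_sub_left,
    inner_sub_right, real_inner_smul_left, real_inner_smul_right, h.inner_mul_conj_left, hadj]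
  ring

theorem inner_spinMap_spinMap (h : IsUnitalComposition mul e) {r : ℝ} {x : O}
    (hrx : r ^ 2 + ‖x‖ ^ 2 = 1) (p q : O × O) :
    ⟪toLp 2 (spinMap mul e r x p), toLp 2 (spinMap mul e r x q)⟫_ℝ = ⟪toLp 2 p, toLp 2 q⟫_ℝ := by
  rw [h.inner_spinMap_left, h.involutive_spinMap hrx]

theorem exists_mem_spinSubgroup_eq_spinMap (h : IsUnitalComposition mul e) {r : ℝ} {x : O}
    (hrx : r ^ 2 + ‖x‖ ^ 2 = 1) : ∃ g ∈ spinSubgroup mul e, ∀ y, g y = spinMap mul e r x y :=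
  ⟨.ofInvolutive _ (h.involutive_spinMap hrx),
    Subgroup.subset_closure ⟨r, x, hrx, fun _ => rfl⟩, fun _ => rfl⟩

theorem inner_map_map_of_mem_spinSubgroup (h : IsUnitalComposition mul e)
    {g : (O × O) ≃ₗ[ℝ] (O × O)} (hg : g ∈ spinSubgroup mul e) (p q : O × O) :
    ⟪toLp 2 (g p), toLp 2 (g q)⟫_ℝ = ⟪toLp 2 p, toLp 2 q⟫_ℝ := by
  refine apply_smul_smul_of_mem_closure (B := fun p q => ⟪toLp 2 p, toLp 2 q⟫_ℝ) ?_ hg p q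
  rintro g ⟨r, x, hrx, hg⟩ p q
  simpa only [LinearEquiv.smul_def, hg] using h.inner_spinMap_spinMap hrx p q

theorem exists_mem_spinSubgroup_snd_eq_zero (h : IsUnitalComposition mul e) {p : O × O}
    (hp : ‖p.1‖ ^ 2 + ‖p.2‖ ^ 2 = 1) : ∃ g ∈ spinSubgroup mul e, (g p).2 = 0 := by
  have := h.nontrivial
  obtain ⟨u, hu, hp₁⟩ := exists_norm_eq_one_and_norm_smul_eq p.1
  let x := unitConj e (mul (unitConj e u) p.2)
  have hx : ‖x‖ = ‖p.2‖ := by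
    simp only [x, LinearIsometryEquiv.norm_map, h.norm_mul, hu, one_mul]
  have hux : mul u (unitConj e x) = p.2 := by
    rw [unitConj_unitConj, h.mul_conj_mul_left, hu, one_pow, one_smul]
  obtain ⟨g, hg, hgx⟩ := h.exists_mem_spinSubgroup_eq_spinMap (r := ‖p.1‖) (x := x) (by rwa [hx])
  refine ⟨g, hg, ?_⟩
  calc (g p).2 = mul p.1 (unitConj e x) - ‖p.1‖ • p.2 := by rw [hgx, spinMap_apply]
    _ = mul (‖p.1‖ • u) (unitConj e x) - ‖p.1‖ • p.2 := by rw [hp₁]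
    _ = 0 := by rw [map_smul, LinearMap.smul_apply, hux, sub_self]

theorem exists_mem_spinSubgroup_mk_zero_eq (h : IsUnitalComposition mul e) {c : O}
    (hc : ‖c‖ = 1) : ∃ g ∈ spinSubgroup mul e, g (c, 0) = (e, 0) := by
  obtain ⟨g, hg, hgc⟩ := h.exists_mem_spinSubgroup_eq_spinMap (r := 0) (x := c) (by simp [hc])
  obtain ⟨k, hk, hke⟩ :=
    h.exists_mem_spinSubgroup_eq_spinMap (r := 0) (x := e) (by simp [h.norm_unit])
  have hg_apply : g (c, 0) = (0, e) := by simp [hgc, spinMap_apply, h.mul_conj_self, hc]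
  have hk_apply : k (0, e) = (e, 0) := by simp [hke, spinMap_apply, h.unit_mul]
  exact ⟨k * g, mul_mem hk hg, by rw [LinearEquiv.mul_apply, hg_apply, hk_apply]⟩

theorem exists_mem_spinSubgroup_eq_mk_unit_zero (h : IsUnitalComposition mul e) {p : O × O}
    (hp : ‖p.1‖ ^ 2 + ‖p.2‖ ^ 2 = 1) : ∃ g ∈ spinSubgroup mul e, g p = (e, 0) := by
  obtain ⟨g, hg, hgp⟩ := h.exists_mem_spinSubgroup_snd_eq_zero hp
  have hnorm : ‖(g p).1‖ = 1 := by
    have hinner := h.inner_map_map_of_mem_spinSubgroup hg p p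
    simp only [prod_inner_apply, real_inner_self_eq_norm_sq, hgp, hp, norm_zero] at hinner
    rw [← sq_eq_sq₀ (norm_nonneg _) zero_le_one]
    linarith
  obtain ⟨k, hk, hkg⟩ := h.exists_mem_spinSubgroup_mk_zero_eq hnorm
  exact ⟨k * g, mul_mem hk hg, by rw [LinearEquiv.mul_apply, ← hkg, ← hgp]⟩

theorem exists_mem_spinSubgroup_apply_eq (h : IsUnitalComposition mul e) {p q : O × O}
    (hp : ‖p.1‖ ^ 2 + ‖p.2‖ ^ 2 = 1) (hq : ‖q.1‖ ^ 2 + ‖q.2‖ ^ 2 = 1) :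
    ∃ g ∈ spinSubgroup mul e, g p = q := by
  obtain ⟨g, hg, hgp⟩ := h.exists_mem_spinSubgroup_eq_mk_unit_zero hp
  obtain ⟨k, hk, hkq⟩ := h.exists_mem_spinSubgroup_eq_mk_unit_zero hq
  refine ⟨k⁻¹ * g, mul_mem (inv_mem hk) hg, ?_⟩
  rw [LinearEquiv.mul_apply, hgp, ← hkq]
  exact k.symm_apply_apply q

end IsUnitalComposition

theorem spin9_isometry_and_transitive_general
    (mul : O →ₗ[ℝ] O →ₗ[ℝ] O) (e : O) (he : ‖e‖ = 1)
    (unit_left : ∀ x : O, mul e x = x) (unit_right : ∀ x : O, mul x e = x)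
    (norm_mul : ∀ x y : O, ‖mul x y‖ = ‖x‖ * ‖y‖)
    (conj : O → O) (hconj : ∀ x : O, conj x = (2 * ⟪x, e⟫_ℝ) • e - x)
    (Spin9 : Subgroup ((O × O) ≃ₗ[ℝ] (O × O)))
    (hSpin9 : Spin9 = Subgroup.closure
      {g : (O × O) ≃ₗ[ℝ] (O × O) | ∃ (r : ℝ) (x : O), r ^ 2 + ‖x‖ ^ 2 = 1 ∧
        ∀ y : O × O, g y = (r • y.1 + mul y.2 x, mul y.1 (conj x) - r • y.2)}) :
    (∀ g ∈ Spin9, ∀ p q : O × O,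
      ⟪(g p).1, (g q).1⟫_ℝ + ⟪(g p).2, (g q).2⟫_ℝ = ⟪p.1, q.1⟫_ℝ + ⟪p.2, q.2⟫_ℝ) ∧
    (∀ p q : O × O, ‖p.1‖ ^ 2 + ‖p.2‖ ^ 2 = 1 → ‖q.1‖ ^ 2 + ‖q.2‖ ^ 2 = 1 →
      ∃ g ∈ Spin9, g p = q) := by
  have h : IsUnitalComposition mul e := ⟨he, unit_left, unit_right, norm_mul⟩
  obtain rfl : conj = unitConj e := funext fun x => (hconj x).trans (unitConj_apply he x).symm
  obtain rfl : Spin9 = spinSubgroup mul e := hSpin9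
  exact ⟨fun _ hg => h.inner_map_map_of_mem_spinSubgroup hg,
    fun _ _ => h.exists_mem_spinSubgroup_apply_eq⟩

end UnitalComposition

/-- Every element of `Spin(9)` (the subgroup of linear automorphisms of
`𝕆 ⊕ 𝕆` generated by the operators `g_{r,x}(y₀,y₁) = (r • y₀ + y₁ x, y₀ x̄ - r • y₁)` with
`r² + ‖x‖² = 1`) is a linear isometry of `𝕆 ⊕ 𝕆` with the direct-sum inner product, and
`Spin(9)` acts transitively on the unit sphere of `𝕆 ⊕ 𝕆`. -/
theorem spin9_isometry_and_transitive
    {O : Type*} [NormedAddCommGroup O] [InnerProductSpace ℝ O]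
    (hdim : Module.finrank ℝ O = 8)
    (mul : O →ₗ[ℝ] O →ₗ[ℝ] O) (e : O) (he : ‖e‖ = 1)
    (unit_left : ∀ x : O, mul e x = x) (unit_right : ∀ x : O, mul x e = x)
    (norm_mul : ∀ x y : O, ‖mul x y‖ = ‖x‖ * ‖y‖)
    (conj : O → O) (hconj : ∀ x : O, conj x = (2 * ⟪x, e⟫_ℝ) • e - x)
    (Spin9 : Subgroup ((O × O) ≃ₗ[ℝ] (O × O)))
    (hSpin9 : Spin9 = Subgroup.closure
      {g : (O × O) ≃ₗ[ℝ] (O × O) | ∃ (r : ℝ) (x : O), r ^ 2 + ‖x‖ ^ 2 = 1 ∧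
        ∀ y : O × O, g y = (r • y.1 + mul y.2 x, mul y.1 (conj x) - r • y.2)}) :
    (∀ g ∈ Spin9, ∀ p q : O × O,
      ⟪(g p).1, (g q).1⟫_ℝ + ⟪(g p).2, (g q).2⟫_ℝ = ⟪p.1, q.1⟫_ℝ + ⟪p.2, q.2⟫_ℝ) ∧
    (∀ p q : O × O, ‖p.1‖ ^ 2 + ‖p.2‖ ^ 2 = 1 → ‖q.1‖ ^ 2 + ‖q.2‖ ^ 2 = 1 →
      ∃ g ∈ Spin9, g p = q) :=
  spin9_isometry_and_transitive_general mul e he unit_left unit_right norm_mul conj hconj Spin9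
    hSpin9
end

section
/- For every x ∈ 𝕆 with ‖x‖ = 1, the left multiplication L_x and the right multiplication R_x are linear isometries of 𝕆 with determinant equal to 1 (i.e. L_x, R_x ∈ SO(𝕆)). -/
open scoped InnerProductSpace

/-!
A linear isometry of a finite-dimensional normed space has determinant `±1`, because it preserves
the Haar measure of the unit ball. As `z` runs over the unit sphere, which is connected in
dimension at least two, the determinants of `L_z` and of `R_z` therefore stay constant, and at
`z = 1` both maps are the identity.
-/

section Determinant

open MeasureTheory

variable {E V : Type*} [NormedAddCommGroup E] [NormedSpace ℝ E] [FiniteDimensional ℝ E]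
  [NormedAddCommGroup V] [NormedSpace ℝ V]

theorem abs_det_linearIsometry (f : E →ₗᵢ[ℝ] E) : |LinearMap.det f.toLinearMap| = 1 := by
  borelize E
  let μ : Measure E := Measure.addHaar
  have image_ball : f.toLinearMap '' Metric.ball 0 1 = Metric.ball 0 1 :=
    ((f.toLinearIsometryEquiv rfl).image_ball 0 1).trans (by rw [map_zero])
  have measure_ball : ENNReal.ofReal |LinearMap.det f.toLinearMap| * μ (Metric.ball 0 1) =
      1 * μ (Metric.ball 0 1) := by
    rw [← Measure.addHaar_image_linearMap, image_ball, one_mul]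
  have ball_ne_zero : μ (Metric.ball 0 1) ≠ 0 := (Metric.measure_ball_pos μ 0 one_pos).ne'
  have ball_ne_top : μ (Metric.ball 0 1) ≠ ⊤ := measure_ball_lt_top.ne
  exact ENNReal.ofReal_eq_one.mp ((ENNReal.mul_left_inj ball_ne_zero ball_ne_top).mp measure_ball)

theorem continuous_det_comp_linearMap [FiniteDimensional ℝ V] (L : V →ₗ[ℝ] E →ₗ[ℝ] E) :
    Continuous fun v ↦ LinearMap.det (L v) :=
  ContinuousLinearMap.continuous_det.comp
    (LinearMap.toContinuousLinearMap.toLinearMap ∘ₗ L).continuous_of_finiteDimensional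

theorem det_eq_det_of_norm_map_eq_mul (hdim : 1 < Module.finrank ℝ V)
    {L : V →ₗ[ℝ] E →ₗ[ℝ] E} (hL : ∀ v y, ‖L v y‖ = ‖v‖ * ‖y‖)
    {u v : V} (hu : ‖u‖ = 1) (hv : ‖v‖ = 1) : LinearMap.det (L u) = LinearMap.det (L v) := by
  have : FiniteDimensional ℝ V := Module.finite_of_finrank_pos (zero_lt_one.trans hdim)
  have sphere_preconnected : IsPreconnected (Metric.sphere (0 : V) 1) :=
    isPreconnected_sphere (Module.lt_rank_of_lt_finrank hdim) 0 1
  have abs_det : ∀ w ∈ Metric.sphere (0 : V) 1, |LinearMap.det (L w)| = 1 := fun w hw ↦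
    abs_det_linearIsometry
      ⟨L w, fun y ↦ by rw [hL, mem_sphere_zero_iff_norm.mp hw, one_mul]⟩
  have hv_mem : v ∈ Metric.sphere (0 : V) 1 := mem_sphere_zero_iff_norm.mpr hv
  have det_v_ne_zero : LinearMap.det (L v) ≠ 0 :=
    abs_pos.mp (one_pos.trans_eq (abs_det v hv_mem).symm)
  have sq_det : ∀ w ∈ Metric.sphere (0 : V) 1, LinearMap.det (L w) ^ 2 = LinearMap.det (L v) ^ 2 :=
    fun w hw ↦ (sq_eq_sq_iff_abs_eq_abs _ _).mpr ((abs_det w hw).trans (abs_det v hv_mem).symm)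
  exact sphere_preconnected.eq_of_sq_eq (continuous_det_comp_linearMap L).continuousOn
    continuousOn_const sq_det (fun _ ↦ det_v_ne_zero) hv_mem rfl (mem_sphere_zero_iff_norm.mpr hu)

theorem det_eq_one_of_norm_map_eq_mul (hdim : 1 < Module.finrank ℝ V)
    {L : V →ₗ[ℝ] E →ₗ[ℝ] E} (hL : ∀ v y, ‖L v y‖ = ‖v‖ * ‖y‖)
    {e : V} (he : ‖e‖ = 1) (hid : L e = LinearMap.id) {v : V} (hv : ‖v‖ = 1) :
    LinearMap.det (L v) = 1 := by
  rw [det_eq_det_of_norm_map_eq_mul hdim hL hv he, hid, LinearMap.det_id]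

end Determinant

theorem mul_left_right_mem_SO_general
    {A : Type*} [NormedAddCommGroup A] [NormedSpace ℝ A]
    (hdim : 1 < Module.finrank ℝ A)
    (mul : A →ₗ[ℝ] A →ₗ[ℝ] A) (e : A) (he : ‖e‖ = 1)
    (unit_left : ∀ x : A, mul e x = x) (unit_right : ∀ x : A, mul x e = x)
    (norm_mul : ∀ x y : A, ‖mul x y‖ = ‖x‖ * ‖y‖)
    (x : A) (hx : ‖x‖ = 1) :
    (∀ y : A, ‖mul x y‖ = ‖y‖) ∧ (∀ y : A, ‖mul y x‖ = ‖y‖) ∧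
    LinearMap.det (mul x) = 1 ∧ LinearMap.det (mul.flip x) = 1 := by
  have : FiniteDimensional ℝ A := Module.finite_of_finrank_pos (zero_lt_one.trans hdim)
  have norm_mul_flip (z y : A) : ‖mul.flip z y‖ = ‖z‖ * ‖y‖ := by
    rw [LinearMap.flip_apply, norm_mul, mul_comm]
  refine ⟨fun y ↦ by rw [norm_mul, hx, one_mul], fun y ↦ by rw [norm_mul, hx, mul_one], ?_, ?_⟩
  · exact det_eq_one_of_norm_map_eq_mul hdim norm_mul he (LinearMap.ext unit_left) hx
  · exact det_eq_one_of_norm_map_eq_mul hdim norm_mul_flip he (LinearMap.ext unit_right) hx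

/-- For every unit octonion `x`, the left multiplication `L_x` and the right
multiplication `R_x` are linear isometries of `𝕆` of determinant `1`, i.e. elements of
`SO(𝕆)`. -/
theorem mul_left_right_mem_SO
    {O : Type*} [NormedAddCommGroup O] [InnerProductSpace ℝ O]
    (hdim : Module.finrank ℝ O = 8)
    (mul : O →ₗ[ℝ] O →ₗ[ℝ] O) (e : O) (he : ‖e‖ = 1)
    (unit_left : ∀ x : O, mul e x = x) (unit_right : ∀ x : O, mul x e = x)
    (norm_mul : ∀ x y : O, ‖mul x y‖ = ‖x‖ * ‖y‖)
    (x : O) (hx : ‖x‖ = 1) :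
    (∀ y : O, ‖mul x y‖ = ‖y‖) ∧ (∀ y : O, ‖mul y x‖ = ‖y‖) ∧
    LinearMap.det (mul x) = 1 ∧ LinearMap.det (mul.flip x) = 1 :=
  mul_left_right_mem_SO_general (by rw [hdim]; norm_num) mul e he unit_left unit_right norm_mul x hx
end

section
/- For every g ∈ Spin(7) and all x, y ∈ 𝕆 one has g(x·y) = χ_g(x)·g(y), where χ_g(x) := ⟨x,1⟩·1 + g((x − ⟨x,1⟩·1)·g⁻¹(1)). Moreover, every g ∈ Spin(7) is a linear isometry of 𝕆, χ_g maps Im 𝕆 isometrically onto Im 𝕆, and χ_{g∘h} = χ_g ∘ χ_h for all g, h ∈ Spin(7). -/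
open scoped InnerProductSpace

/-!
As `x ↦ g (x * g⁻¹ 1)` is linear and fixes `1`, it coincides with `χ_g`, and it is the only
possible `f` in `g (x * y) = f x * g y`. Hence it suffices to find, for each `g ∈ Spin(7)`, some
isometry `f` with this property. The `g` admitting one form a group, so only the
generators `g = L_u` matter. Polarizing `‖x * y‖ = ‖x‖ * ‖y‖` gives the Clifford relation
`x (w y) + w (x y) = -2⟪x, w⟫ y` for imaginary `x`, `w`. It says that `L_u` commutes with `L_x` for
`x` in the plane spanned by `1` and `u`, and anticommutes with `L_x` for `x` orthogonal to that
plane. So `f` is the reflection fixing the plane.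
-/

section VectorRep

variable {R A : Type*} [CommSemiring R] [AddCommMonoid A] [Module R A]

/-- The vector representation `χ_g`, in the form `x ↦ g (x * g⁻¹ e)` that makes sense over any
semiring of scalars; it is multiplicative in `g` only on suitable groups of operators `g`. -/
def vectorRep (mul : A →ₗ[R] A →ₗ[R] A) (e : A) (g : A ≃ₗ[R] A) : A →ₗ[R] A :=
  g.toLinearMap ∘ₗ mul.flip (g.symm e)

variable {mul : A →ₗ[R] A →ₗ[R] A} {e : A}

theorem vectorRep_apply (g : A ≃ₗ[R] A) (x : A) : vectorRep mul e g x = g (mul x (g.symm e)) :=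
  rfl

theorem vectorRep_unit (unit_left : ∀ x, mul e x = x) (g : A ≃ₗ[R] A) :
    vectorRep mul e g e = e := by
  rw [vectorRep_apply, unit_left, g.apply_symm_apply]

theorem vectorRep_eq_of_map_mul (unit_right : ∀ x, mul x e = x) {g : A ≃ₗ[R] A} {f : A → A}
    (map_mul : ∀ x y, g (mul x y) = mul (f x) (g y)) (x : A) : vectorRep mul e g x = f x := by
  rw [vectorRep_apply, map_mul, g.apply_symm_apply, unit_right]

theorem vectorRep_trans {h : A ≃ₗ[R] A}
    (map_mul : ∀ x y, h (mul x y) = mul (vectorRep mul e h x) (h y)) (g : A ≃ₗ[R] A) (x : A) :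
    vectorRep mul e (h.trans g) x = vectorRep mul e g (vectorRep mul e h x) := by
  rw [vectorRep_apply, vectorRep_apply, LinearEquiv.trans_apply, LinearEquiv.symm_trans_apply,
    map_mul, h.apply_symm_apply]

end VectorRep

section Composition

variable {V S T : Type*} [NormedAddCommGroup V] [InnerProductSpace ℝ V]
  [NormedAddCommGroup S] [InnerProductSpace ℝ S] [NormedAddCommGroup T] [InnerProductSpace ℝ T]

theorem inner_map_left_eq {β : V →ₗ[ℝ] S →ₗ[ℝ] T} (norm_map : ∀ v s, ‖β v s‖ = ‖v‖ * ‖s‖)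
    (v : V) (s t : S) : ⟪β v s, β v t⟫_ℝ = ‖v‖ ^ 2 * ⟪s, t⟫_ℝ := by
  have h := norm_add_sq_real (β v s) (β v t)
  rw [← map_add, norm_map, norm_map, norm_map, mul_pow, norm_add_sq_real] at h
  linarith

theorem inner_map_add_inner_map_swap {β : V →ₗ[ℝ] S →ₗ[ℝ] T}
    (norm_map : ∀ v s, ‖β v s‖ = ‖v‖ * ‖s‖) (v w : V) (s t : S) :
    ⟪β v s, β w t⟫_ℝ + ⟪β w s, β v t⟫_ℝ = 2 * ⟪v, w⟫_ℝ * ⟪s, t⟫_ℝ := by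
  have h := inner_map_left_eq norm_map (v + w) s t
  rw [norm_add_sq_real, map_add, LinearMap.add_apply, LinearMap.add_apply, inner_add_left,
    inner_add_right, inner_add_right] at h
  linarith [inner_map_left_eq norm_map v s t, inner_map_left_eq norm_map w s t]

variable {β : V →ₗ[ℝ] S →ₗ[ℝ] S} {e : V}

theorem inner_map_left_eq_neg (norm_map : ∀ v s, ‖β v s‖ = ‖v‖ * ‖s‖) (map_unit : ∀ s, β e s = s)
    {v : V} (hv : ⟪v, e⟫_ℝ = 0) (s t : S) : ⟪β v s, t⟫_ℝ = -⟪s, β v t⟫_ℝ := by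
  have h := inner_map_add_inner_map_swap norm_map v e s t
  rw [map_unit, map_unit, hv] at h
  linarith

theorem clifford_relation (norm_map : ∀ v s, ‖β v s‖ = ‖v‖ * ‖s‖) (map_unit : ∀ s, β e s = s)
    {v w : V} (hv : ⟪v, e⟫_ℝ = 0) (hw : ⟪w, e⟫_ℝ = 0) (s : S) :
    β v (β w s) + β w (β v s) = -(2 * ⟪v, w⟫_ℝ) • s := by
  refine ext_inner_right ℝ fun t => ?_
  rw [inner_add_left, inner_map_left_eq_neg norm_map map_unit hv (β w s),
    inner_map_left_eq_neg norm_map map_unit hw (β v s), real_inner_smul_left]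
  linarith [inner_map_add_inner_map_swap norm_map v w s t]

theorem map_map_eq_map_reflection (norm_map : ∀ v s, ‖β v s‖ = ‖v‖ * ‖s‖)
    (map_unit : ∀ s, β e s = s) {u : V} (hu : ⟪u, e⟫_ℝ = 0) (v : V) (s : S) :
    β u (β v s) = β ((ℝ ∙ e ⊔ ℝ ∙ u).reflection v) (β u s) := by
  obtain ⟨p, hp, q, hq, rfl⟩ := (ℝ ∙ e ⊔ ℝ ∙ u).exists_add_mem_mem_orthogonal v
  rw [map_add (Submodule.reflection _), Submodule.reflection_mem_subspace_eq_self hp,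
    Submodule.reflection_mem_subspace_orthogonalComplement_eq_neg hq]
  have commute : β u (β p s) = β p (β u s) := by
    obtain ⟨_, he', _, hu', rfl⟩ := Submodule.mem_sup.mp hp
    obtain ⟨a, rfl⟩ := Submodule.mem_span_singleton.mp he'
    obtain ⟨b, rfl⟩ := Submodule.mem_span_singleton.mp hu'
    simp [map_unit]
  have anticommute : β u (β q s) = -β q (β u s) := by
    have hqe : ⟪q, e⟫_ℝ = 0 := Submodule.inner_left_of_mem_orthogonal
      (Submodule.mem_sup_left (Submodule.mem_span_singleton_self e)) hq
    have huq : ⟪u, q⟫_ℝ = 0 := Submodule.inner_right_of_mem_orthogonal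
      (Submodule.mem_sup_right (Submodule.mem_span_singleton_self u)) hq
    have h := clifford_relation norm_map map_unit hu hqe s
    rw [huq, mul_zero, neg_zero, zero_smul] at h
    exact eq_neg_of_add_eq_zero_left h
  simp only [map_add, map_neg, LinearMap.add_apply, LinearMap.neg_apply, commute, anticommute]

/-- The isometries `g` of `S` with `g ∘ β v ∘ g⁻¹ = β (f v)` for some linear isometry `f` of `V`;
the condition is written without `g⁻¹`. -/
def isometricNormalizer (β : V →ₗ[ℝ] S →ₗ[ℝ] S) : Subgroup (S ≃ₗ[ℝ] S) where
  carrier := {g | (∀ s, ‖g s‖ = ‖s‖) ∧ ∃ f : V ≃ₗᵢ[ℝ] V, ∀ v s, g (β v s) = β (f v) (g s)}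
  one_mem' := ⟨fun _ => rfl, 1, fun _ _ => rfl⟩
  mul_mem' := by
    rintro g g' ⟨norm_g, f, hf⟩ ⟨norm_g', f', hf'⟩
    exact ⟨fun s => (norm_g _).trans (norm_g' s), f * f',
      fun v s => (congrArg g (hf' v s)).trans (hf _ _)⟩
  inv_mem' := by
    rintro g ⟨norm_g, f, hf⟩
    have g_inv (s : S) : g (g⁻¹ s) = s := g.apply_symm_apply s
    refine ⟨fun s => by rw [← norm_g, g_inv], f.symm, fun v s => g.injective ?_⟩
    rw [hf, g_inv, g_inv, f.apply_symm_apply]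

/-- The group generated by the operators `β u` with `u` a unit vector orthogonal to `e`. It is
`Spin(7)` when `β` is the multiplication of the octonions and `e` is their unit. -/
def spinorGroup (β : V →ₗ[ℝ] S →ₗ[ℝ] S) (e : V) : Subgroup (S ≃ₗ[ℝ] S) :=
  Subgroup.closure {g | ∃ u, ⟪u, e⟫_ℝ = 0 ∧ ‖u‖ = 1 ∧ ∀ s, g s = β u s}

theorem spinorGroup_le_isometricNormalizer (norm_map : ∀ v s, ‖β v s‖ = ‖v‖ * ‖s‖)
    (map_unit : ∀ s, β e s = s) : spinorGroup β e ≤ isometricNormalizer β := by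
  refine (Subgroup.closure_le _).mpr ?_
  rintro g ⟨u, hu, norm_u, hg⟩
  refine ⟨fun s => by rw [hg, norm_map, norm_u, one_mul], (ℝ ∙ e ⊔ ℝ ∙ u).reflection,
    fun v s => ?_⟩
  rw [hg, hg, map_map_eq_map_reflection norm_map map_unit hu]

theorem inner_map_map_of_mem_isometricNormalizer {g : S ≃ₗ[ℝ] S} (hg : g ∈ isometricNormalizer β)
    (s t : S) : ⟪g s, g t⟫_ℝ = ⟪s, t⟫_ℝ :=
  LinearIsometryEquiv.inner_map_map ⟨g, hg.1⟩ s t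

end Composition

section UnitalComposition

variable {O : Type*} [NormedAddCommGroup O] [InnerProductSpace ℝ O]
  {mul : O →ₗ[ℝ] O →ₗ[ℝ] O} {e : O} {g : O ≃ₗ[ℝ] O}

theorem exists_linearIsometryEquiv_eq_vectorRep (unit_right : ∀ x, mul x e = x)
    (hg : g ∈ isometricNormalizer mul) : ∃ f : O ≃ₗᵢ[ℝ] O, ∀ x, vectorRep mul e g x = f x :=
  let ⟨_, f, hf⟩ := hg
  ⟨f, vectorRep_eq_of_map_mul unit_right hf⟩

theorem map_mul_eq_vectorRep_mul (unit_right : ∀ x, mul x e = x)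
    (hg : g ∈ isometricNormalizer mul) (x y : O) :
    g (mul x y) = mul (vectorRep mul e g x) (g y) := by
  obtain ⟨_, f, hf⟩ := hg
  rw [hf, vectorRep_eq_of_map_mul unit_right hf]

theorem inner_vectorRep_vectorRep (unit_right : ∀ x, mul x e = x)
    (hg : g ∈ isometricNormalizer mul) (x y : O) :
    ⟪vectorRep mul e g x, vectorRep mul e g y⟫_ℝ = ⟪x, y⟫_ℝ := by
  obtain ⟨f, hf⟩ := exists_linearIsometryEquiv_eq_vectorRep unit_right hg
  rw [hf, hf, f.inner_map_map]

theorem inner_vectorRep_unit (unit_left : ∀ x, mul e x = x) (unit_right : ∀ x, mul x e = x)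
    (hg : g ∈ isometricNormalizer mul) (x : O) : ⟪vectorRep mul e g x, e⟫_ℝ = ⟪x, e⟫_ℝ := by
  simpa only [vectorRep_unit unit_left] using inner_vectorRep_vectorRep unit_right hg x e

theorem vectorRep_surjective (unit_right : ∀ x, mul x e = x) (hg : g ∈ isometricNormalizer mul) :
    Function.Surjective (vectorRep mul e g) := by
  obtain ⟨f, hf⟩ := exists_linearIsometryEquiv_eq_vectorRep unit_right hg
  exact (funext hf : ⇑(vectorRep mul e g) = f) ▸ f.surjective

theorem smul_add_map_mul_sub_eq_vectorRep (unit_left : ∀ x, mul e x = x) (g : O ≃ₗ[ℝ] O) (x : O) :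
    ⟪x, e⟫_ℝ • e + g (mul (x - ⟪x, e⟫_ℝ • e) (g.symm e)) = vectorRep mul e g x := by
  rw [← vectorRep_apply, map_sub, map_smul, vectorRep_unit unit_left, add_sub_cancel]

end UnitalComposition

theorem spin7_vector_representation_general
    {O : Type*} [NormedAddCommGroup O] [InnerProductSpace ℝ O]
    (mul : O →ₗ[ℝ] O →ₗ[ℝ] O) (e : O)
    (unit_left : ∀ x : O, mul e x = x) (unit_right : ∀ x : O, mul x e = x)
    (norm_mul : ∀ x y : O, ‖mul x y‖ = ‖x‖ * ‖y‖)
    (chi : (O ≃ₗ[ℝ] O) → O → O)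
    (hchi : ∀ (g : O ≃ₗ[ℝ] O) (x : O),
      chi g x = ⟪x, e⟫_ℝ • e + g (mul (x - ⟪x, e⟫_ℝ • e) (g.symm e))) :
    (∀ g ∈ spinorGroup mul e, ∀ x y : O, g (mul x y) = mul (chi g x) (g y)) ∧
    (∀ g ∈ spinorGroup mul e, ∀ p q : O, ⟪g p, g q⟫_ℝ = ⟪p, q⟫_ℝ) ∧
    (∀ g ∈ spinorGroup mul e, ∀ x : O, ⟪chi g x, e⟫_ℝ = ⟪x, e⟫_ℝ) ∧
    (∀ g ∈ spinorGroup mul e, ∀ x y : O, ⟪chi g x, chi g y⟫_ℝ = ⟪x, y⟫_ℝ) ∧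
    (∀ g ∈ spinorGroup mul e, Function.Surjective (chi g)) ∧
    (∀ g, ∀ h ∈ spinorGroup mul e, ∀ x : O, chi (h.trans g) x = chi g (chi h x)) := by
  obtain rfl : chi = fun g => ⇑(vectorRep mul e g) :=
    funext₂ fun g x => (hchi g x).trans (smul_add_map_mul_sub_eq_vectorRep unit_left g x)
  have normalizes {g : O ≃ₗ[ℝ] O} (hg : g ∈ spinorGroup mul e) : g ∈ isometricNormalizer mul :=
    spinorGroup_le_isometricNormalizer norm_mul unit_left hg
  exact ⟨fun g hg => map_mul_eq_vectorRep_mul unit_right (normalizes hg),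
    fun g hg => inner_map_map_of_mem_isometricNormalizer (normalizes hg),
    fun g hg => inner_vectorRep_unit unit_left unit_right (normalizes hg),
    fun g hg => inner_vectorRep_vectorRep unit_right (normalizes hg),
    fun g hg => vectorRep_surjective unit_right (normalizes hg),
    fun g h hh => vectorRep_trans (map_mul_eq_vectorRep_mul unit_right (normalizes hh)) g⟩

/-- For `g ∈ Spin(7)` one has `g(x·y) = χ_g(x)·g(y)` where
`χ_g(x) = ⟨x,1⟩·1 + g((x - ⟨x,1⟩·1)·g⁻¹(1))`; moreover every `g ∈ Spin(7)` is a linear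
isometry of `𝕆`, `χ_g` maps `Im 𝕆` isometrically onto `Im 𝕆`, and `χ_{g∘h} = χ_g ∘ χ_h`. -/
theorem spin7_vector_representation
    {O : Type*} [NormedAddCommGroup O] [InnerProductSpace ℝ O]
    (hdim : Module.finrank ℝ O = 8)
    (mul : O →ₗ[ℝ] O →ₗ[ℝ] O) (e : O) (he : ‖e‖ = 1)
    (unit_left : ∀ x : O, mul e x = x) (unit_right : ∀ x : O, mul x e = x)
    (norm_mul : ∀ x y : O, ‖mul x y‖ = ‖x‖ * ‖y‖)
    (Spin7 : Subgroup (O ≃ₗ[ℝ] O))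
    (hSpin7 : Spin7 = Subgroup.closure
      {g : O ≃ₗ[ℝ] O | ∃ u : O, ⟪u, e⟫_ℝ = 0 ∧ ‖u‖ = 1 ∧ ∀ x : O, g x = mul u x})
    (chi : (O ≃ₗ[ℝ] O) → O → O)
    (hchi : ∀ (g : O ≃ₗ[ℝ] O) (x : O),
      chi g x = ⟪x, e⟫_ℝ • e + g (mul (x - ⟪x, e⟫_ℝ • e) (g.symm e))) :
    (∀ g ∈ Spin7, ∀ x y : O, g (mul x y) = mul (chi g x) (g y)) ∧
    (∀ g ∈ Spin7, ∀ p q : O, ⟪g p, g q⟫_ℝ = ⟪p, q⟫_ℝ) ∧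
    (∀ g ∈ Spin7, ∀ u : O, ⟪u, e⟫_ℝ = 0 → ⟪chi g u, e⟫_ℝ = 0) ∧
    (∀ g ∈ Spin7, ∀ u u' : O, ⟪u, e⟫_ℝ = 0 → ⟪u', e⟫_ℝ = 0 →
      ⟪chi g u, chi g u'⟫_ℝ = ⟪u, u'⟫_ℝ) ∧
    (∀ g ∈ Spin7, ∀ v : O, ⟪v, e⟫_ℝ = 0 → ∃ u : O, ⟪u, e⟫_ℝ = 0 ∧ chi g u = v) ∧
    (∀ g ∈ Spin7, ∀ h ∈ Spin7, ∀ x : O, chi (h.trans g) x = chi g (chi h x)) := by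
  obtain ⟨map_mul, isometry, inner_unit, inner_chi, surjective, chi_trans⟩ :=
    spin7_vector_representation_general mul e unit_left unit_right norm_mul chi hchi
  subst hSpin7
  exact ⟨map_mul, isometry, fun g hg u hu => (inner_unit g hg u).trans hu,
    fun g hg u u' _ _ => inner_chi g hg u u',
    fun g hg v hv => let ⟨u, hu⟩ := surjective g hg v
      ⟨u, (inner_unit g hg u).symm.trans (hu ▸ hv), hu⟩,
    fun g _ => chi_trans g⟩
end

section
/- Let A ∈ End(𝕆 ⊕ 𝕆). Then A ∈ 𝔰𝔭𝔦𝔫(9) if and only if the following four conditions hold: (1) A is skew-adjoint, i.e. ⟨A p, q⟩ = −⟨p, A q⟩ for all p, q ∈ 𝕆 ⊕ 𝕆; (2) A₁₀(y) = y·(A₁₀(1)) for all y ∈ 𝕆; (3) A₀₀(y) − y·(A₀₀(1)) = A₁₁(y) − y·(A₁₁(1)) for all y ∈ 𝕆; (4) Σ_{c=0}^{7} ⟨x·e_c, A₁₁(e_c)⟩ = 4·⟨x, A₀₀(1)⟩ for all x ∈ 𝕆. -/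
open scoped InnerProductSpace

/-! Let `γ u (y₀, y₁) = (y₁u, y₀ū)`, let `σ` be the grading operator and let `n` be the dimension.
The products `ℐ_i ∘ ℐ_j` with `i < j` span the same space as the bivectors `γ u γ v - ⟪u, v⟫` and
`γ a σ`, and these satisfy the four relations by the exchange identity
`(xu)v̄ + (xv)ū = 2⟪u, v⟫x`.

Conversely, for any orthonormal basis `b`,
`∑ j, (y(q(x b_j)))b̄_j = 4 y(qx) + (n - 4) x(qy)`.
If `S` is skew and `s = ∑ i, b̄_i(S b_i)`, taking `x = S b_i`, `q = b̄_i` and summing over `i` gives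
`4(n - 4) S y + (8 - n) ys`. As `y ↦ ys` comes from the bivector of `1` and `s`, every skew `S` is
the lower right block of a combination of even bivectors as soon as `n ≠ 4`. Subtracting from `A`
such a combination for `S = A₁₁`, and the odd bivector that matches `A₁₀`, leaves an operator
whose remaining blocks vanish by the relations. -/

/-- `IsCompositionAlgebra mul e` says that the bilinear product `mul` on a real inner product space
is unital with unit `e` and multiplicative for the norm. The product is a bilinear map rather than
a ring structure, since a ring structure would bring a second addition. -/
structure IsCompositionAlgebra {O : Type*} [NormedAddCommGroup O] [InnerProductSpace ℝ O]
    (mul : O →ₗ[ℝ] O →ₗ[ℝ] O) (e : O) : Prop where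
  norm_unit : ‖e‖ = 1
  unit_mul : ∀ x : O, mul e x = x
  mul_unit : ∀ x : O, mul x e = x
  norm_mul : ∀ x y : O, ‖mul x y‖ = ‖x‖ * ‖y‖

namespace IsCompositionAlgebra

variable {O : Type*} [NormedAddCommGroup O] [InnerProductSpace ℝ O]

/-- The conjugation `x ↦ 2⟪x, e⟫e - x` of a composition algebra with unit `e`, as a linear map. -/
noncomputable def conj (e : O) : O →ₗ[ℝ] O :=
  (2 : ℝ) • (innerₗ O e).smulRight e - LinearMap.id

theorem conj_apply (e x : O) : conj e x = (2 * ⟪x, e⟫_ℝ) • e - x := by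
  simp [conj, real_inner_comm, mul_smul]

theorem inner_conj_left (e x y : O) : ⟪conj e x, y⟫_ℝ = ⟪x, conj e y⟫_ℝ := by
  simp only [conj_apply, inner_sub_left, inner_sub_right, real_inner_smul_left,
    real_inner_smul_right, real_inner_comm e y]
  ring

variable {mul : O →ₗ[ℝ] O →ₗ[ℝ] O} {e : O}

local infixl:75 "⋆" => mul
local postfix:max "†" => conj e

theorem flip (h : IsCompositionAlgebra mul e) : IsCompositionAlgebra mul.flip e where
  norm_unit := h.norm_unit
  unit_mul := h.mul_unit
  mul_unit := h.unit_mul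
  norm_mul x y := (h.norm_mul y x).trans (mul_comm _ _)

theorem inner_unit_unit (h : IsCompositionAlgebra mul e) : ⟪e, e⟫_ℝ = 1 := by
  rw [real_inner_self_eq_norm_sq, h.norm_unit, one_pow]

theorem conj_conj (h : IsCompositionAlgebra mul e) (x : O) : x†† = x := by
  simp only [conj_apply, inner_sub_left, real_inner_smul_left, h.inner_unit_unit]
  module

theorem conj_unit (h : IsCompositionAlgebra mul e) : e† = e := by
  rw [conj_apply, h.inner_unit_unit]
  module

theorem inner_mul_mul_left (h : IsCompositionAlgebra mul e) (x u v : O) :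
    ⟪x ⋆ u, x ⋆ v⟫_ℝ = ‖x‖ ^ 2 * ⟪u, v⟫_ℝ := by
  have norm_mul_add := norm_add_sq_real (x ⋆ u) (x ⋆ v)
  rw [← map_add, h.norm_mul, h.norm_mul, h.norm_mul] at norm_mul_add
  linear_combination (-1 / 2) * norm_mul_add + (‖x‖ ^ 2 / 2) * norm_add_sq_real u v

theorem inner_mul_mul_add_inner_mul_mul (h : IsCompositionAlgebra mul e) (x y u v : O) :
    ⟪x ⋆ u, y ⋆ v⟫_ℝ + ⟪x ⋆ v, y ⋆ u⟫_ℝ = 2 * ⟪x, y⟫_ℝ * ⟪u, v⟫_ℝ := by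
  have polarized := h.inner_mul_mul_left (x + y) u v
  simp only [map_add, LinearMap.add_apply, inner_add_left, inner_add_right, norm_add_sq_real,
    h.inner_mul_mul_left] at polarized
  linarith [real_inner_comm (y ⋆ u) (x ⋆ v)]

theorem inner_mul_right (h : IsCompositionAlgebra mul e) (x u y : O) :
    ⟪x ⋆ u, y⟫_ℝ = ⟪x, y ⋆ u†⟫_ℝ := by
  have exchange := h.inner_mul_mul_add_inner_mul_mul x y u e
  rw [h.mul_unit, h.mul_unit] at exchange
  simp only [conj_apply, map_sub, map_smul, h.mul_unit, inner_sub_right, real_inner_smul_right]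
  linarith

theorem inner_mul_left (h : IsCompositionAlgebra mul e) (u x y : O) :
    ⟪u ⋆ x, y⟫_ℝ = ⟪x, u† ⋆ y⟫_ℝ :=
  h.flip.inner_mul_right x u y

theorem conj_mul (h : IsCompositionAlgebra mul e) (x y : O) : (x ⋆ y)† = y† ⋆ x† := by
  refine ext_inner_right ℝ fun z => ?_
  calc ⟪(x ⋆ y)†, z⟫_ℝ
      = ⟪x, z† ⋆ y†⟫_ℝ := by rw [inner_conj_left, h.inner_mul_right]
    _ = ⟪z ⋆ x, y†⟫_ℝ := by rw [h.inner_mul_left]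
    _ = ⟪y† ⋆ x†, z⟫_ℝ := by rw [h.inner_mul_right, real_inner_comm, h.inner_mul_right, h.conj_conj]

theorem mul_mul_conj_add (h : IsCompositionAlgebra mul e) (x a b : O) :
    x ⋆ a ⋆ b† + x ⋆ b ⋆ a† = (2 * ⟪a, b⟫_ℝ) • x := by
  refine ext_inner_right ℝ fun z => ?_
  have exchange := h.inner_mul_mul_add_inner_mul_mul x z a b
  rw [inner_add_left, h.inner_mul_right, h.inner_mul_right _ a†, h.conj_conj, h.conj_conj,
    real_inner_smul_left]
  linarith

theorem mul_conj_mul_add (h : IsCompositionAlgebra mul e) (a b x : O) :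
    a ⋆ (b† ⋆ x) + b ⋆ (a† ⋆ x) = (2 * ⟪a, b⟫_ℝ) • x := by
  have := h.flip.mul_mul_conj_add x a† b†
  simpa only [LinearMap.flip_apply, h.conj_conj, inner_conj_left, add_comm] using this

theorem mul_mul_conj_self (h : IsCompositionAlgebra mul e) (x a : O) :
    x ⋆ a ⋆ a† = ‖a‖ ^ 2 • x := by
  have := h.mul_mul_conj_add x a a
  rw [real_inner_self_eq_norm_sq, ← two_smul ℝ, mul_smul] at this
  exact smul_right_injective O two_ne_zero this

theorem mul_add_conj_mul_conj (h : IsCompositionAlgebra mul e) (a b : O) :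
    a ⋆ b + b† ⋆ a† = (2 * ⟪a, b†⟫_ℝ) • e := by
  rw [← h.conj_mul, conj_apply, h.inner_mul_right, h.unit_mul, add_sub_cancel]

theorem mul_mul_add_mul_mul (h : IsCompositionAlgebra mul e) (a q b : O) :
    a ⋆ (q ⋆ b) + b ⋆ (q ⋆ a)
      = (2 * ⟪b, q†⟫_ℝ) • a + (2 * ⟪a, q†⟫_ℝ) • b - (2 * ⟪a, b⟫_ℝ) • q† := by
  have swap : ∀ x : O, q ⋆ x = (2 * ⟪x, q†⟫_ℝ) • e - x† ⋆ q† := fun x => by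
    rw [← inner_conj_left, real_inner_comm, ← h.mul_add_conj_mul_conj, add_sub_cancel_right]
  rw [swap a, swap b, map_sub, map_sub, map_smul, map_smul, h.mul_unit, h.mul_unit,
    ← h.mul_conj_mul_add a b q†]
  abel

section OrthonormalBasis

variable {ι : Type*} [Fintype ι] (b : OrthonormalBasis ι ℝ O)

theorem sum_inner_smul_map {F : Type*} [AddCommGroup F] [Module ℝ F] (f : O →ₗ[ℝ] F) (x : O) :
    ∑ i, ⟪x, b i⟫_ℝ • f (b i) = f x := by
  simp only [real_inner_comm _ x, ← map_smul, ← map_sum, b.sum_repr']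

theorem sum_inner_mul_right (h : IsCompositionAlgebra mul e) (f : O → O) (x : O) :
    ∑ i, ⟪x ⋆ b i, f (b i)⟫_ℝ = ⟪x, ∑ i, f (b i) ⋆ (b i)†⟫_ℝ := by
  simp only [h.inner_mul_right, inner_sum]

theorem sum_mul_mul_conj (h : IsCompositionAlgebra mul e) (x : O) :
    ∑ i, x ⋆ b i ⋆ (b i)† = (Fintype.card ι : ℝ) • x := by
  simp [h.mul_mul_conj_self, b.norm_eq_one, Nat.cast_smul_eq_nsmul]

theorem sum_mul_mul_self (h : IsCompositionAlgebra mul e) (x : O) :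
    ∑ i, x ⋆ b i ⋆ b i = (2 - Fintype.card ι : ℝ) • x := by
  have square : ∀ i, x ⋆ b i ⋆ b i
      = (2 : ℝ) • ⟪e, b i⟫_ℝ • x ⋆ b i - x ⋆ b i ⋆ (b i)† := fun i => by
    rw [conj_apply, map_sub, map_smul, h.mul_unit, real_inner_comm]
    module
  rw [Finset.sum_congr rfl fun i _ => square i, Finset.sum_sub_distrib, ← Finset.smul_sum,
    sum_inner_smul_map b (mul x), h.mul_unit, h.sum_mul_mul_conj]
  module

theorem sum_self_mul_mul_self (h : IsCompositionAlgebra mul e) (x : O) :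
    ∑ i, b i ⋆ x ⋆ b i = (2 - Fintype.card ι : ℝ) • x† := by
  have reflection : ∀ i, b i ⋆ x ⋆ b i = (2 : ℝ) • ⟪x†, b i⟫_ℝ • b i - x† := fun i => by
    have := h.mul_mul_conj_add (b i) x (b i)†
    have unit_norm := h.mul_mul_conj_self e (b i)
    rw [b.norm_eq_one, h.unit_mul, one_pow, one_smul] at unit_norm
    rw [h.conj_conj, unit_norm, h.unit_mul, ← inner_conj_left] at this
    rw [smul_smul, ← this, add_sub_cancel_right]
  rw [Finset.sum_congr rfl fun i _ => reflection i, Finset.sum_sub_distrib, ← Finset.smul_sum,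
    Finset.sum_const, Finset.card_univ, ← Nat.cast_smul_eq_nsmul ℝ]
  simp only [real_inner_comm _ x†, b.sum_repr']
  module

theorem sum_mul_mul_mul_conj (h : IsCompositionAlgebra mul e) (x m : O) :
    ∑ i, x ⋆ b i ⋆ m ⋆ (b i)† = (2 : ℝ) • x ⋆ m + (Fintype.card ι - 2 : ℝ) • x ⋆ m† := by
  have exchange : ∀ i, x ⋆ b i ⋆ m ⋆ (b i)†
      = (2 : ℝ) • ⟪m, b i⟫_ℝ • x ⋆ b i - mul.flip m† (x ⋆ b i ⋆ b i) := fun i => by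
    rw [smul_smul, ← h.mul_mul_conj_add, LinearMap.flip_apply, add_sub_cancel_right]
  rw [Finset.sum_congr rfl fun i _ => exchange i, Finset.sum_sub_distrib, ← Finset.smul_sum,
    sum_inner_smul_map b (mul x), ← map_sum, h.sum_mul_mul_self, map_smul, LinearMap.flip_apply]
  module

theorem sum_self_mul_mul_mul_conj (h : IsCompositionAlgebra mul e) (u w : O) :
    ∑ i, b i ⋆ u ⋆ w ⋆ (b i)† = (2 : ℝ) • w ⋆ u + (Fintype.card ι - 2 : ℝ) • u† ⋆ w† := by
  have exchange : ∀ i, b i ⋆ u ⋆ w ⋆ (b i)†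
      = (2 : ℝ) • ⟪w, b i⟫_ℝ • mul.flip u (b i) - mul.flip w† (b i ⋆ u ⋆ b i) := fun i => by
    rw [smul_smul, LinearMap.flip_apply, ← h.mul_mul_conj_add, LinearMap.flip_apply,
      add_sub_cancel_right]
  rw [Finset.sum_congr rfl fun i _ => exchange i, Finset.sum_sub_distrib, ← Finset.smul_sum,
    sum_inner_smul_map b (mul.flip u), ← map_sum, h.sum_self_mul_mul_self, map_smul,
    LinearMap.flip_apply, LinearMap.flip_apply]
  module

theorem sum_mul_mul_mul_mul_conj (h : IsCompositionAlgebra mul e) (y q x : O) :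
    ∑ i, y ⋆ (q ⋆ (x ⋆ b i)) ⋆ (b i)†
      = (4 : ℝ) • y ⋆ (q ⋆ x) + (Fintype.card ι - 4 : ℝ) • x ⋆ (q ⋆ y) := by
  have exchange : ∀ i, y ⋆ (q ⋆ (x ⋆ b i)) ⋆ (b i)†
      = (2 : ℝ) • ⟪x† ⋆ q†, b i⟫_ℝ • (mul y ∘ₗ conj e) (b i)
        + (2 * ⟪y, q†⟫_ℝ) • x ⋆ b i ⋆ (b i)†
        - (2 : ℝ) • ⟪x† ⋆ y, b i⟫_ℝ • (mul q† ∘ₗ conj e) (b i)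
        - x ⋆ b i ⋆ (q ⋆ y) ⋆ (b i)† := fun i => by
    rw [eq_sub_of_add_eq (h.mul_mul_add_mul_mul y q (x ⋆ b i)), real_inner_comm (b i) (x† ⋆ q†),
      real_inner_comm (b i) (x† ⋆ y), ← h.inner_mul_left, ← h.inner_mul_left,
      real_inner_comm y (x ⋆ b i)]
    simp only [map_add, map_sub, map_smul, LinearMap.add_apply, LinearMap.sub_apply,
      LinearMap.smul_apply, LinearMap.comp_apply, smul_smul]
  have conj_qy : (q ⋆ y)† = (2 * ⟪y, q†⟫_ℝ) • e - q ⋆ y := by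
    rw [conj_apply, h.inner_mul_right, h.unit_mul, ← inner_conj_left, real_inner_comm]
  have clifford : q† ⋆ (y† ⋆ x) = (2 * ⟪y, q†⟫_ℝ) • x - y ⋆ (q ⋆ x) := by
    have := h.mul_conj_mul_add y q† x
    rw [h.conj_conj] at this
    rw [← this, add_sub_cancel_left]
  rw [Finset.sum_congr rfl fun i _ => exchange i]
  simp only [Finset.sum_add_distrib, Finset.sum_sub_distrib, ← Finset.smul_sum]
  rw [sum_inner_smul_map b (mul y ∘ₗ conj e), sum_inner_smul_map b (mul q† ∘ₗ conj e),
    h.sum_mul_mul_conj, h.sum_mul_mul_mul_conj, LinearMap.comp_apply, LinearMap.comp_apply,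
    h.conj_mul, h.conj_mul, h.conj_conj, h.conj_conj, clifford, conj_qy, map_sub, map_smul,
    h.mul_unit]
  module

end OrthonormalBasis

section Clifford

/-- The Clifford map `u ↦ ((y₀, y₁) ↦ (y₁ ⋆ u, y₀ ⋆ u†))`; the operators `ℐ_i` with `i ≤ 7` are its
values at the basis vectors. -/
noncomputable def cliffordMap (mul : O →ₗ[ℝ] O →ₗ[ℝ] O) (e : O) : O →ₗ[ℝ] Module.End ℝ (O × O) where
  toFun u := (mul.flip u ∘ₗ LinearMap.snd ℝ O O).prod (mul.flip (conj e u) ∘ₗ LinearMap.fst ℝ O O)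
  map_add' u v := by ext <;> simp
  map_smul' r u := by ext <;> simp

@[simp]
theorem cliffordMap_apply (u : O) (y : O × O) :
    cliffordMap mul e u y = (y.2 ⋆ u, y.1 ⋆ u†) :=
  rfl

theorem cliffordMap_mul_add (h : IsCompositionAlgebra mul e) (u v : O) :
    cliffordMap mul e u * cliffordMap mul e v + cliffordMap mul e v * cliffordMap mul e u
      = (2 * ⟪u, v⟫_ℝ) • 1 := by
  refine LinearMap.ext fun y => Prod.ext ?_ ?_
  · have := h.mul_mul_conj_add y.1 u† v†
    rw [h.conj_conj, h.conj_conj, inner_conj_left, h.conj_conj, add_comm] at this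
    simpa using this
  · simpa [add_comm, real_inner_comm] using h.mul_mul_conj_add y.2 v u

/-- The grading operator `(y₀, y₁) ↦ (y₀, -y₁)`, which is `ℐ₈`. -/
def grading (O : Type*) [NormedAddCommGroup O] [InnerProductSpace ℝ O] : Module.End ℝ (O × O) :=
  LinearMap.prodMap LinearMap.id (-LinearMap.id)

@[simp]
theorem grading_apply (y : O × O) : grading O y = (y.1, -y.2) :=
  rfl

/-- The even bivector `γ u * γ v - ⟪u, v⟫ • 1`, the image of `u ∧ v` under the Clifford map `γ`. -/
noncomputable def evenBivector (mul : O →ₗ[ℝ] O →ₗ[ℝ] O) (e : O) :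
    O →ₗ[ℝ] O →ₗ[ℝ] Module.End ℝ (O × O) :=
  LinearMap.mk₂ ℝ (fun u v => cliffordMap mul e u * cliffordMap mul e v - ⟪u, v⟫_ℝ • 1)
    (fun u u' v => by rw [map_add, add_mul, inner_add_left]; module)
    (fun r u v => by rw [map_smul, smul_mul_assoc, real_inner_smul_left]; module)
    (fun u v v' => by rw [map_add, mul_add, inner_add_right]; module)
    (fun r u v => by rw [map_smul, mul_smul_comm, real_inner_smul_right]; module)

theorem evenBivector_eq (u v : O) :
    evenBivector mul e u v = cliffordMap mul e u * cliffordMap mul e v - ⟪u, v⟫_ℝ • 1 :=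
  rfl

theorem evenBivector_apply (u v : O) (y : O × O) :
    evenBivector mul e u v y
      = (y.1 ⋆ v† ⋆ u - ⟪u, v⟫_ℝ • y.1, y.2 ⋆ v ⋆ u† - ⟪u, v⟫_ℝ • y.2) :=
  rfl

theorem evenBivector_swap (h : IsCompositionAlgebra mul e) (u v : O) :
    evenBivector mul e u v = -evenBivector mul e v u := by
  rw [evenBivector_eq, evenBivector_eq, eq_sub_of_add_eq (h.cliffordMap_mul_add u v),
    real_inner_comm u v]
  module

theorem evenBivector_self (h : IsCompositionAlgebra mul e) (u : O) :
    evenBivector mul e u u = 0 := by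
  linear_combination (norm := module) (1 / 2 : ℝ) • h.evenBivector_swap u u

theorem inner_evenBivector_left (h : IsCompositionAlgebra mul e) (u v : O) (p q : O × O) :
    ⟪(evenBivector mul e u v p).1, q.1⟫_ℝ + ⟪(evenBivector mul e u v p).2, q.2⟫_ℝ
      = -(⟪p.1, (evenBivector mul e u v q).1⟫_ℝ + ⟪p.2, (evenBivector mul e u v q).2⟫_ℝ) := by
  have adjoint : ⟪(evenBivector mul e u v p).1, q.1⟫_ℝ + ⟪(evenBivector mul e u v p).2, q.2⟫_ℝ
      = ⟪p.1, (evenBivector mul e v u q).1⟫_ℝ + ⟪p.2, (evenBivector mul e v u q).2⟫_ℝ := by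
    simp only [evenBivector_apply, inner_sub_left, inner_sub_right, h.inner_mul_right,
      h.conj_conj, real_inner_smul_left, real_inner_smul_right, real_inner_comm u v]
  rw [adjoint, h.evenBivector_swap]
  simp only [LinearMap.neg_apply, Prod.fst_neg, Prod.snd_neg, inner_neg_right]
  ring

/-- The odd bivector `γ a * σ`, with `γ` the Clifford map and `σ` the grading operator. -/
noncomputable def oddBivector (mul : O →ₗ[ℝ] O →ₗ[ℝ] O) (e : O) : O →ₗ[ℝ] Module.End ℝ (O × O) :=
  LinearMap.mulRight ℝ (grading O) ∘ₗ cliffordMap mul e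

theorem oddBivector_apply (a : O) (y : O × O) :
    oddBivector mul e a y = (-(y.2 ⋆ a), y.1 ⋆ a†) := by
  simp [oddBivector]

/-- The spin Lie algebra in basis-free form, spanned by all even and odd bivectors. -/
noncomputable def spinSubmodule (mul : O →ₗ[ℝ] O →ₗ[ℝ] O) (e : O) :
    Submodule ℝ (Module.End ℝ (O × O)) :=
  Submodule.map₂ (evenBivector mul e) ⊤ ⊤ ⊔ LinearMap.range (oddBivector mul e)

theorem evenBivector_mem_spinSubmodule (u v : O) : evenBivector mul e u v ∈ spinSubmodule mul e :=
  Submodule.mem_sup_left (Submodule.apply_mem_map₂ _ trivial trivial)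

theorem oddBivector_mem_spinSubmodule (a : O) : oddBivector mul e a ∈ spinSubmodule mul e :=
  Submodule.mem_sup_right ⟨a, rfl⟩

theorem span_mul_eq_spinSubmodule (h : IsCompositionAlgebra mul e) {n : ℕ}
    (b : OrthonormalBasis (Fin n) ℝ O) (J : Fin (n + 1) → Module.End ℝ (O × O))
    (hJ : ∀ i : Fin n, J i.castSucc = cliffordMap mul e (b i))
    (hJ_last : J (Fin.last n) = grading O) :
    Submodule.span ℝ {A | ∃ i j, i < j ∧ A = J i * J j} = spinSubmodule mul e := by
  have even : ∀ {i j}, i ≠ j →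
      J (Fin.castSucc i) * J (Fin.castSucc j) = evenBivector mul e (b i) (b j) := fun hij => by
    rw [hJ, hJ, evenBivector_eq, b.inner_eq_zero hij, zero_smul, sub_zero]
  have odd : ∀ i, J (Fin.castSucc i) * J (Fin.last n) = oddBivector mul e (b i) := fun i => by
    rw [hJ, hJ_last]
    rfl
  have top_eq : (⊤ : Submodule ℝ O) = Submodule.span ℝ (Set.range b) := by
    rw [← b.coe_toBasis, b.toBasis.span_eq]
  apply le_antisymm
  · rw [Submodule.span_le]
    rintro _ ⟨i, j, hij, rfl⟩
    obtain ⟨i, rfl⟩ := Fin.exists_castSucc_eq.mpr (Fin.ne_last_of_lt hij)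
    cases j using Fin.lastCases with
    | last => exact odd i ▸ oddBivector_mem_spinSubmodule _
    | cast j =>
      exact even (Fin.castSucc_lt_castSucc_iff.mp hij).ne ▸ evenBivector_mem_spinSubmodule _ _
  · have even_mem : ∀ {i j : Fin n}, i < j → evenBivector mul e (b i) (b j) ∈
        Submodule.span ℝ {A | ∃ i j, i < j ∧ A = J i * J j} := fun hij =>
      Submodule.subset_span ⟨_, _, Fin.castSucc_lt_castSucc_iff.mpr hij, (even hij.ne).symm⟩
    rw [spinSubmodule, LinearMap.range_eq_map, top_eq, Submodule.map₂_span_span,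
      Submodule.map_span, sup_le_iff, Submodule.span_le, Submodule.span_le]
    constructor
    · rintro _ ⟨_, ⟨i, rfl⟩, _, ⟨j, rfl⟩, rfl⟩
      rcases lt_trichotomy i j with hij | rfl | hji
      · exact even_mem hij
      · simp only [h.evenBivector_self, SetLike.mem_coe, Submodule.zero_mem]
      · simp only [h.evenBivector_swap (b i), SetLike.mem_coe, neg_mem_iff]
        exact even_mem hji
    · rintro _ ⟨_, ⟨i, rfl⟩, rfl⟩
      exact Submodule.subset_span ⟨_, _, Fin.castSucc_lt_last i, (odd i).symm⟩

end Clifford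

section Relations

variable {ι : Type*} [Fintype ι] (b : OrthonormalBasis ι ℝ O)

/-- The operators on `O × O` satisfying the four linear relations that characterize the spin Lie
algebra. The coefficient `4` of the last relation is `card ι - 4` in dimension `card ι = 8`. -/
def spinRelations (mul : O →ₗ[ℝ] O →ₗ[ℝ] O) (e : O) {ι : Type*} [Fintype ι]
    (b : OrthonormalBasis ι ℝ O) : Submodule ℝ (Module.End ℝ (O × O)) where
  carrier := {A |
    (∀ p q : O × O,
      ⟪(A p).1, q.1⟫_ℝ + ⟪(A p).2, q.2⟫_ℝ = -(⟪p.1, (A q).1⟫_ℝ + ⟪p.2, (A q).2⟫_ℝ)) ∧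
    (∀ y : O, (A (y, 0)).2 = mul y (A (e, 0)).2) ∧
    (∀ y : O, (A (y, 0)).1 - mul y (A (e, 0)).1 = (A (0, y)).2 - mul y (A (0, e)).2) ∧
    (∀ x : O, ∑ i, ⟪mul x (b i), (A (0, b i)).2⟫_ℝ
      = (Fintype.card ι - 4) * ⟪x, (A (e, 0)).1⟫_ℝ)}
  zero_mem' := by simp
  add_mem' := by
    rintro A B ⟨skew_A, lower_A, assoc_A, trace_A⟩ ⟨skew_B, lower_B, assoc_B, trace_B⟩
    refine ⟨fun p q => ?_, fun y => ?_, fun y => ?_, fun x => ?_⟩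
    · simp only [LinearMap.add_apply, Prod.fst_add, Prod.snd_add, inner_add_left, inner_add_right]
      linarith [skew_A p q, skew_B p q]
    · simp only [LinearMap.add_apply, Prod.snd_add, map_add, lower_A y, lower_B y]
    · simp only [LinearMap.add_apply, Prod.fst_add, Prod.snd_add, map_add]
      rw [add_sub_add_comm, assoc_A, assoc_B, add_sub_add_comm]
    · simp only [LinearMap.add_apply, Prod.fst_add, Prod.snd_add, inner_add_right,
        Finset.sum_add_distrib, trace_A, trace_B, mul_add]
  smul_mem' := by
    rintro r A ⟨skew, lower, assoc, trace⟩
    refine ⟨fun p q => ?_, fun y => ?_, fun y => ?_, fun x => ?_⟩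
    · simp only [LinearMap.smul_apply, Prod.smul_fst, Prod.smul_snd, real_inner_smul_left,
        real_inner_smul_right]
      linear_combination r * skew p q
    · simp only [LinearMap.smul_apply, Prod.smul_snd, map_smul, lower y]
    · simp only [LinearMap.smul_apply, Prod.smul_fst, Prod.smul_snd, map_smul]
      rw [← smul_sub, assoc, ← smul_sub]
    · simp only [LinearMap.smul_apply, Prod.smul_fst, Prod.smul_snd, real_inner_smul_right,
        ← Finset.mul_sum, trace]
      ring

theorem mem_spinRelations {A : Module.End ℝ (O × O)} :
    A ∈ spinRelations mul e b ↔
      (∀ p q : O × O,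
        ⟪(A p).1, q.1⟫_ℝ + ⟪(A p).2, q.2⟫_ℝ = -(⟪p.1, (A q).1⟫_ℝ + ⟪p.2, (A q).2⟫_ℝ)) ∧
      (∀ y : O, (A (y, 0)).2 = y ⋆ (A (e, 0)).2) ∧
      (∀ y : O, (A (y, 0)).1 - y ⋆ (A (e, 0)).1 = (A (0, y)).2 - y ⋆ (A (0, e)).2) ∧
      (∀ x : O, ∑ i, ⟪x ⋆ b i, (A (0, b i)).2⟫_ℝ
        = (Fintype.card ι - 4) * ⟪x, (A (e, 0)).1⟫_ℝ) :=
  Iff.rfl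

theorem oddBivector_mem_spinRelations (h : IsCompositionAlgebra mul e) (a : O) :
    oddBivector mul e a ∈ spinRelations mul e b := by
  refine ⟨fun p q => ?_, fun y => ?_, fun y => ?_, fun x => ?_⟩ <;>
    simp only [oddBivector_apply]
  · rw [inner_neg_left, inner_neg_right, h.inner_mul_right, h.inner_mul_right _ a†, h.conj_conj]
    ring
  · rw [h.unit_mul]
  · simp
  · simp

theorem evenBivector_mem_spinRelations (h : IsCompositionAlgebra mul e) (u v : O) :
    evenBivector mul e u v ∈ spinRelations mul e b := by
  refine ⟨h.inner_evenBivector_left u v, fun y => ?_, fun y => ?_, fun x => ?_⟩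
  · simp [evenBivector_apply]
  -- Both sides are minus the associator of `y`, `v`, `u`.
  · simp only [evenBivector_apply, conj_apply, map_sub, map_smul, LinearMap.sub_apply,
      LinearMap.smul_apply, h.unit_mul, h.mul_unit]
    module
  · have clifford : v† ⋆ u + u† ⋆ v = (2 * ⟪u, v⟫_ℝ) • e := by
      have := h.mul_mul_conj_add e v† u†
      rwa [h.unit_mul, h.unit_mul, h.conj_conj, h.conj_conj, inner_conj_left, h.conj_conj,
        real_inner_comm] at this
    have sum_conj : ∑ i, b i ⋆ (b i)† = (Fintype.card ι : ℝ) • e := by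
      simpa only [h.unit_mul] using h.sum_mul_mul_conj b e
    have trace : ∑ i, (evenBivector mul e u v (0, b i)).2 ⋆ (b i)†
        = (Fintype.card ι - 4 : ℝ) • (evenBivector mul e u v (e, 0)).1 := by
      simp only [evenBivector_apply, map_sub, map_smul, LinearMap.sub_apply, LinearMap.smul_apply,
        Finset.sum_sub_distrib, ← Finset.smul_sum, h.sum_self_mul_mul_mul_conj, h.conj_conj,
        sum_conj, h.unit_mul]
      linear_combination (norm := module) (2 : ℝ) • clifford
    rw [h.sum_inner_mul_right b fun c => (evenBivector mul e u v (0, c)).2, trace,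
      real_inner_smul_right]

theorem spinSubmodule_le_spinRelations (h : IsCompositionAlgebra mul e) :
    spinSubmodule mul e ≤ spinRelations mul e b := by
  refine sup_le (Submodule.map₂_le.mpr fun u _ v _ => h.evenBivector_mem_spinRelations b u v) ?_
  rintro _ ⟨a, rfl⟩
  exact h.oddBivector_mem_spinRelations b a

theorem sum_map_mul_conj_mul (h : IsCompositionAlgebra mul e) {S : O →ₗ[ℝ] O}
    (hS : ∀ x y, ⟪S x, y⟫_ℝ = -⟪x, S y⟫_ℝ) (y : O) :
    ∑ i, S (b i) ⋆ ((b i)† ⋆ y) = (4 : ℝ) • S y - y ⋆ ∑ i, (b i)† ⋆ S (b i) := by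
  have skew_self : ∀ x, ⟪S x, x⟫_ℝ = 0 := fun x => by
    linarith [hS x x, real_inner_comm x (S x)]
  have exchange : ∀ i, S (b i) ⋆ ((b i)† ⋆ y)
      = (2 : ℝ) • ⟪y, b i⟫_ℝ • S (b i) + (2 : ℝ) • ⟪S y, b i⟫_ℝ • b i
        - y ⋆ ((b i)† ⋆ S (b i)) := fun i => by
    rw [eq_sub_of_add_eq (h.mul_mul_add_mul_mul (S (b i)) (b i)† y), h.conj_conj, skew_self,
      hS (b i), real_inner_comm (S y)]
    module
  rw [Finset.sum_congr rfl fun i _ => exchange i, Finset.sum_sub_distrib, Finset.sum_add_distrib,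
    ← Finset.smul_sum, ← Finset.smul_sum, sum_inner_smul_map, ← map_sum]
  simp only [real_inner_comm _ (S y), b.sum_repr']
  module

theorem sum_sum_mul_mul_mul_conj (h : IsCompositionAlgebra mul e) {S : O →ₗ[ℝ] O}
    (hS : ∀ x y, ⟪S x, y⟫_ℝ = -⟪x, S y⟫_ℝ) (y : O) :
    ∑ i, ∑ j, y ⋆ ((b i)† ⋆ (S (b i) ⋆ b j)) ⋆ (b j)†
      = (4 * (Fintype.card ι - 4) : ℝ) • S y
        + (8 - Fintype.card ι : ℝ) • y ⋆ ∑ i, (b i)† ⋆ S (b i) := by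
  simp only [h.sum_mul_mul_mul_mul_conj, Finset.sum_add_distrib, ← Finset.smul_sum]
  rw [h.sum_map_mul_conj_mul b hS, ← map_sum]
  module

theorem exists_mem_spinSubmodule_of_skew (h : IsCompositionAlgebra mul e)
    (b : OrthonormalBasis ι ℝ O) (hcard : Fintype.card ι ≠ 4) {S : O →ₗ[ℝ] O}
    (hS : ∀ x y, ⟪S x, y⟫_ℝ = -⟪x, S y⟫_ℝ) :
    ∃ C ∈ spinSubmodule mul e, ∀ y, (C (y, 0)).2 = 0 ∧ (C (0, y)).2 = S y := by
  have skew_self : ∀ x, ⟪x, S x⟫_ℝ = 0 := fun x => by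
    linarith [hS x x, real_inner_comm x (S x)]
  have card_sub_ne_zero : (Fintype.card ι - 4 : ℝ) ≠ 0 := sub_ne_zero.mpr (mod_cast hcard)
  let s := ∑ i, (b i)† ⋆ S (b i)
  have inner_unit_s : ⟪e, s⟫_ℝ = 0 := by
    simp only [s, inner_sum, ← h.inner_mul_left, h.mul_unit, skew_self, Finset.sum_const_zero]
  have inner_basis : ∀ i j, ⟪b j, (b i)† ⋆ (S (b i) ⋆ b j)⟫_ℝ = 0 := fun i j => by
    have := h.flip.inner_mul_mul_left (b j) (b i) (S (b i))
    rw [← h.inner_mul_left]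
    simpa only [LinearMap.flip_apply, skew_self, mul_zero] using this
  refine ⟨(4 * (Fintype.card ι - 4) : ℝ)⁻¹ •
    (∑ i, ∑ j, evenBivector mul e (b j) ((b i)† ⋆ (S (b i) ⋆ b j))
      - (8 - Fintype.card ι : ℝ) • evenBivector mul e e s), ?_, fun y => ⟨?_, ?_⟩⟩
  · exact Submodule.smul_mem _ _ (Submodule.sub_mem _
      (Submodule.sum_mem _ fun i _ => Submodule.sum_mem _ fun j _ =>
        evenBivector_mem_spinSubmodule _ _)
      (Submodule.smul_mem _ _ (evenBivector_mem_spinSubmodule _ _)))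
  · simp [evenBivector_apply, Prod.snd_sum]
  · simp only [LinearMap.smul_apply, LinearMap.sub_apply, LinearMap.sum_apply, Prod.smul_snd,
      Prod.snd_sub, Prod.snd_sum, evenBivector_apply, inner_basis, inner_unit_s, zero_smul,
      sub_zero, h.sum_sum_mul_mul_mul_conj b hS, h.conj_unit, h.mul_unit]
    rw [add_sub_cancel_right, inv_smul_smul₀ (mul_ne_zero four_ne_zero card_sub_ne_zero)]

theorem eq_zero_of_mem_spinRelations (hcard : Fintype.card ι ≠ 4) {A : Module.End ℝ (O × O)}
    (hA : A ∈ spinRelations mul e b) (lower_left : ∀ y, (A (y, 0)).2 = 0)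
    (lower_right : ∀ y, (A (0, y)).2 = 0) : A = 0 := by
  obtain ⟨skew, -, assoc, trace⟩ := (mem_spinRelations b).mp hA
  have card_sub_ne_zero : (Fintype.card ι - 4 : ℝ) ≠ 0 := sub_ne_zero.mpr (mod_cast hcard)
  have upper_left_unit : (A (e, 0)).1 = 0 := ext_inner_left ℝ fun x => by
    simpa [lower_right, card_sub_ne_zero] using trace x
  have upper_left : ∀ y, (A (y, 0)).1 = 0 := fun y => by
    simpa [lower_right, upper_left_unit] using assoc y
  have upper_right : ∀ y, (A (0, y)).1 = 0 := fun y => ext_inner_right ℝ fun x => by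
    simpa [lower_left] using skew (0, y) (x, 0)
  refine LinearMap.prod_ext (LinearMap.ext fun y => ?_) (LinearMap.ext fun y => ?_)
  · exact Prod.ext (upper_left y) (lower_left y)
  · exact Prod.ext (upper_right y) (lower_right y)

theorem spinRelations_le_spinSubmodule (h : IsCompositionAlgebra mul e)
    (hcard : Fintype.card ι ≠ 4) : spinRelations mul e b ≤ spinSubmodule mul e := by
  intro A hA
  obtain ⟨skew, lower_left, -, -⟩ := (mem_spinRelations b).mp hA
  let S : O →ₗ[ℝ] O := LinearMap.snd ℝ O O ∘ₗ A ∘ₗ LinearMap.inr ℝ O O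
  obtain ⟨C, hC, C_apply⟩ := h.exists_mem_spinSubmodule_of_skew b hcard (S := S) fun x y => by
    simpa [S] using skew (0, x) (0, y)
  let N := oddBivector mul e (A (e, 0)).2†
  have hCN : C + N ∈ spinSubmodule mul e :=
    Submodule.add_mem _ hC (oddBivector_mem_spinSubmodule _)
  have eq_zero : A - (C + N) = 0 := by
    refine eq_zero_of_mem_spinRelations b hcard
      (Submodule.sub_mem _ hA (h.spinSubmodule_le_spinRelations b hCN)) (fun y => ?_) fun y => ?_
    · simp [N, C_apply, oddBivector_apply, h.conj_conj, lower_left y]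
    · simp [N, C_apply, oddBivector_apply, S]
  rwa [sub_eq_zero.mp eq_zero]

theorem spinSubmodule_eq_spinRelations (h : IsCompositionAlgebra mul e)
    (hcard : Fintype.card ι ≠ 4) : spinSubmodule mul e = spinRelations mul e b :=
  le_antisymm (h.spinSubmodule_le_spinRelations b) (h.spinRelations_le_spinSubmodule b hcard)

end Relations

end IsCompositionAlgebra

theorem mem_spin9_iff_relations_general
    {O : Type*} [NormedAddCommGroup O] [InnerProductSpace ℝ O]
    {mul : O →ₗ[ℝ] O →ₗ[ℝ] O} {e : O} (h : IsCompositionAlgebra mul e)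
    {n : ℕ} (hn : n ≠ 4) (b : OrthonormalBasis (Fin n) ℝ O)
    (J : Fin (n + 1) → ((O × O) →ₗ[ℝ] (O × O)))
    (hJ : ∀ (i : Fin n) (y : O × O),
      J i.castSucc y = (mul y.2 (b i), mul y.1 (IsCompositionAlgebra.conj e (b i))))
    (hJ_last : ∀ y : O × O, J (Fin.last n) y = (y.1, -y.2))
    (A : (O × O) →ₗ[ℝ] (O × O)) :
    A ∈ Submodule.span ℝ
        {A : (O × O) →ₗ[ℝ] (O × O) | ∃ i j : Fin (n + 1), i < j ∧ A = (J i).comp (J j)} ↔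
      ((∀ p q : O × O,
        ⟪(A p).1, q.1⟫_ℝ + ⟪(A p).2, q.2⟫_ℝ = -(⟪p.1, (A q).1⟫_ℝ + ⟪p.2, (A q).2⟫_ℝ)) ∧
      (∀ y : O, (A (y, (0 : O))).2 = mul y ((A (e, (0 : O))).2)) ∧
      (∀ y : O, (A (y, (0 : O))).1 - mul y ((A (e, (0 : O))).1)
        = (A ((0 : O), y)).2 - mul y ((A ((0 : O), e)).2)) ∧
      (∀ x : O, ∑ c : Fin n, ⟪mul x (b c), (A ((0 : O), b c)).2⟫_ℝ
        = (n - 4) * ⟪x, (A (e, (0 : O))).1⟫_ℝ)) := by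
  have span_eq := h.span_mul_eq_spinSubmodule b J (fun i => LinearMap.ext (hJ i))
    (LinearMap.ext hJ_last)
  have relations := h.spinSubmodule_eq_spinRelations b (by rwa [Fintype.card_fin])
  have mem_iff := (SetLike.ext_iff.mp (span_eq.trans relations) A).trans
    (IsCompositionAlgebra.mem_spinRelations b)
  rwa [Fintype.card_fin] at mem_iff

/-- An endomorphism `A` of `𝕆 ⊕ 𝕆` belongs to the Lie algebra `𝔰𝔭𝔦𝔫(9)`
(the span of the compositions `ℐ_i ∘ ℐ_j`, `i < j`, of the operators
`ℐ_i(y₀,y₁) = (y₁·e_i, y₀·ē_i)` and `ℐ₈(y₀,y₁) = (y₀, -y₁)`) if and only if `A` is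
skew-adjoint and its blocks satisfy `A₁₀(y) = y·A₁₀(1)`,
`A₀₀(y) − y·A₀₀(1) = A₁₁(y) − y·A₁₁(1)` and `Σ_c ⟨x e_c, A₁₁ e_c⟩ = 4⟨x, A₀₀(1)⟩`. -/
theorem mem_spin9_iff_relations
    {O : Type*} [NormedAddCommGroup O] [InnerProductSpace ℝ O]
    (hdim : Module.finrank ℝ O = 8)
    (mul : O →ₗ[ℝ] O →ₗ[ℝ] O) (e : O) (he : ‖e‖ = 1)
    (unit_left : ∀ x : O, mul e x = x) (unit_right : ∀ x : O, mul x e = x)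
    (norm_mul : ∀ x y : O, ‖mul x y‖ = ‖x‖ * ‖y‖)
    (conj : O → O) (hconj : ∀ x : O, conj x = (2 * ⟪x, e⟫_ℝ) • e - x)
    (b : OrthonormalBasis (Fin 8) ℝ O) (hb : b 0 = e)
    (J : Fin 9 → ((O × O) →ₗ[ℝ] (O × O)))
    (hJ : ∀ (i : Fin 8) (y : O × O),
      J i.castSucc y = (mul y.2 (b i), mul y.1 (conj (b i))))
    (hJ8 : ∀ y : O × O, J 8 y = (y.1, -y.2))
    (spin9 : Submodule ℝ ((O × O) →ₗ[ℝ] (O × O)))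
    (hspin9 : spin9 = Submodule.span ℝ
      {A : (O × O) →ₗ[ℝ] (O × O) | ∃ i j : Fin 9, i < j ∧ A = (J i).comp (J j)})
    (A : (O × O) →ₗ[ℝ] (O × O)) :
    A ∈ spin9 ↔
      ((∀ p q : O × O,
        ⟪(A p).1, q.1⟫_ℝ + ⟪(A p).2, q.2⟫_ℝ = -(⟪p.1, (A q).1⟫_ℝ + ⟪p.2, (A q).2⟫_ℝ)) ∧
      (∀ y : O, (A (y, (0 : O))).2 = mul y ((A (e, (0 : O))).2)) ∧
      (∀ y : O, (A (y, (0 : O))).1 - mul y ((A (e, (0 : O))).1)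
        = (A ((0 : O), y)).2 - mul y ((A ((0 : O), e)).2)) ∧
      (∀ x : O, ∑ c : Fin 8, ⟪mul x (b c), (A ((0 : O), b c)).2⟫_ℝ
        = 4 * ⟪x, (A (e, (0 : O))).1⟫_ℝ)) := by
  subst hspin9
  obtain rfl : conj = IsCompositionAlgebra.conj e :=
    funext fun x => (hconj x).trans (IsCompositionAlgebra.conj_apply e x).symm
  convert mem_spin9_iff_relations_general ⟨he, unit_left, unit_right, norm_mul⟩ (by decide) b J hJ
    hJ8 A using 7
  norm_num
end

section
/- Let K be a field and 𝒜 = ⊕_{k≥0} 𝒜_k a commutative, associative, unital graded K-algebra generated by finitely many homogeneous elements ĝ₁, …, ĝ_m of positive degrees d₁, …, d_m. Let R = K[g₁, …, g_m] be the polynomial ring graded by deg g_i = d_i, and let x ↦ x̂ denote the graded K-algebra morphism R → 𝒜 sending g_i to ĝ_i. Write G_k = {g_i : d_i = k}, and construct inductively finite subsets A_k, B_k, F_k ⊆ R_k as follows: B₀ := {1}; A_k := {x·y : x ∈ B_l, y ∈ G_{k−l}, 0 ≤ l < k}; B_k = {x_{k,1}, …, x_{k,b_k}} is any maximal subset of A_k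 such that the images x̂_{k,1}, …, x̂_{k,b_k} are linearly independent in 𝒜_k; F_k := {x − Σ_{i=1}^{b_k} λ_{k,i}(x)·x_{k,i} : x ∈ A_k \ B_k}, where λ_{k,i}(x) ∈ K are the unique scalars with x̂ = Σ_{i=1}^{b_k} λ_{k,i}(x)·x̂_{k,i}. Let I ⊆ R be the ideal generated by ⋃_{k≥1} F_k. Then the morphism x ↦ x̂ descends to an isomorphism of graded K-algebras R/I ≅ 𝒜, and for each k the set {x̂ : x ∈ B_k} is a K-basis of 𝒜_k. -/
open MvPolynomial

/-!
Modulo the relations, multiplying an element of `B k` by a generator `X i` lands in the span of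
`B (k + d i)`. Hence by induction on monomials every weighted homogeneous polynomial of weight `k`
lies in `I ⊔ span (B k)`. Since `φ` kills `I` and is injective on `span (B k)`, in each degree its
kernel is no larger than `I` and its image is spanned by `φ '' B k`; as `φ` is graded and
surjective, this describes `ker φ` and every `𝒜 k` completely.
-/

section GradedLinearMap

variable {R M N ι : Type*} [Semiring R] [AddCommMonoid M] [Module R M]
  [AddCommMonoid N] [Module R N]
  [DecidableEq ι] {ℳ : ι → Submodule R M} [DirectSum.Decomposition ℳ]
  {𝒩 : ι → Submodule R N} [DirectSum.Decomposition 𝒩]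
  {f : M →ₗ[R] N}

theorem decompose_linearMap_apply (hf : ∀ k, ℳ k ≤ (𝒩 k).comap f) (x : M) (k : ι) :
    (DirectSum.decompose 𝒩 (f x) k : N) = f (DirectSum.decompose ℳ x k) := by
  induction x using DirectSum.Decomposition.inductionOn ℳ with
  | zero => simp only [map_zero, DirectSum.decompose_zero, DirectSum.zero_apply,
      ZeroMemClass.coe_zero]
  | @homogeneous l x =>
    have hfx : f x ∈ 𝒩 l := hf l x.2
    obtain rfl | hlk := eq_or_ne l k
    · rw [DirectSum.decompose_of_mem_same _ hfx, DirectSum.decompose_of_mem_same _ x.2]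
    · rw [DirectSum.decompose_of_mem_ne _ hfx hlk, DirectSum.decompose_of_mem_ne _ x.2 hlk,
        map_zero]
  | add x y hx hy =>
    simp only [map_add, DirectSum.decompose_add, DirectSum.add_apply, Submodule.coe_add, hx, hy]

theorem map_graded_piece_eq_of_surjective (hf : ∀ k, ℳ k ≤ (𝒩 k).comap f)
    (hsurj : Function.Surjective f) (k : ι) : (ℳ k).map f = 𝒩 k := by
  refine le_antisymm (Submodule.map_le_iff_le_comap.mpr (hf k)) fun y hy ↦ ?_
  obtain ⟨x, rfl⟩ := hsurj y
  refine ⟨DirectSum.decompose ℳ x k, SetLike.coe_mem _, ?_⟩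
  rw [← decompose_linearMap_apply hf, DirectSum.decompose_of_mem_same _ hy]

theorem map_eq_graded_piece_of_le_sup (hf : ∀ k, ℳ k ≤ (𝒩 k).comap f)
    (hsurj : Function.Surjective f) {k : ι} {P W : Submodule R M}
    (hP : P ≤ LinearMap.ker f) (hW : W ≤ ℳ k) (hsup : ℳ k ≤ P ⊔ W) : W.map f = 𝒩 k := by
  rw [← map_graded_piece_eq_of_surjective hf hsurj k]
  refine le_antisymm (Submodule.map_mono hW) ?_
  calc (ℳ k).map f ≤ (P ⊔ W).map f := Submodule.map_mono hsup
    _ = W.map f := by rw [Submodule.map_sup, (LinearMap.le_ker_iff_map).mp hP, bot_sup_eq]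

end GradedLinearMap

theorem ker_eq_of_graded_piece_le_sup {R M N ι : Type*} [Ring R] [AddCommGroup M] [Module R M]
    [AddCommMonoid N] [Module R N] [DecidableEq ι]
    {ℳ : ι → Submodule R M} [DirectSum.Decomposition ℳ]
    {𝒩 : ι → Submodule R N} [DirectSum.Decomposition 𝒩]
    {f : M →ₗ[R] N} {P : Submodule R M} {V : ι → Submodule R M} (hf : ∀ k, ℳ k ≤ (𝒩 k).comap f)
    (hP : P ≤ LinearMap.ker f) (hV : ∀ k, ℳ k ≤ P ⊔ V k)
    (hdisj : ∀ k, Disjoint (V k) (LinearMap.ker f)) : LinearMap.ker f = P := by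
  classical
  have hker (k : ι) : ℳ k ⊓ LinearMap.ker f ≤ P :=
    calc ℳ k ⊓ LinearMap.ker f ≤ (P ⊔ V k) ⊓ LinearMap.ker f := inf_le_inf_right _ (hV k)
      _ = P ⊔ V k ⊓ LinearMap.ker f := sup_inf_assoc_of_le _ hP
      _ = P := by rw [(hdisj k).eq_bot, sup_bot_eq]
  refine le_antisymm (fun x hx ↦ ?_) hP
  rw [← DirectSum.sum_support_decompose ℳ x]
  refine Submodule.sum_mem _ fun k _ ↦ hker k ⟨SetLike.coe_mem _, ?_⟩
  rw [SetLike.mem_coe, LinearMap.mem_ker, ← decompose_linearMap_apply (𝒩 := 𝒩) hf,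
    LinearMap.mem_ker.mp hx, DirectSum.decompose_zero, DirectSum.zero_apply, ZeroMemClass.coe_zero]

section WeightedHomogeneous

variable {R σ ι : Type*} [CommSemiring R] [AddCommMonoid ι] {d : σ → ι}

theorem totalDegree_lt_totalDegree_mul_X {p : MvPolynomial σ R} (hp : p ≠ 0) (i : σ) :
    p.totalDegree < (p * X i).totalDegree := by
  obtain ⟨s, hs, hmax⟩ := Finset.exists_mem_eq_sup p.support (support_nonempty.mpr hp)
    fun s ↦ s.sum fun _ e ↦ e
  have hmem : s + Finsupp.single i 1 ∈ (p * X i).support := by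
    rw [support_mul_X]
    exact Finset.mem_map_of_mem _ hs
  have hdeg : p.totalDegree + 1 = (s + Finsupp.single i 1).sum fun _ e ↦ e := by
    rw [Finsupp.sum_add_index' (fun _ ↦ rfl) (fun _ _ _ ↦ rfl), Finsupp.sum_single_index rfl,
      totalDegree, hmax]
  exact Nat.lt_of_succ_le (hdeg.trans_le (le_totalDegree hmem))

theorem weightedHomogeneousSubmodule_le_of_mul_X_mem {N : ι → Submodule R (MvPolynomial σ R)}
    (one_mem : 1 ∈ N 0) (mul_X_mem : ∀ k i, ∀ p ∈ N k, p * X i ∈ N (k + d i)) (k : ι) :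
    weightedHomogeneousSubmodule R d k ≤ N k := by
  have mul_X_pow_mem (k : ι) (i : σ) (n : ℕ) {p : MvPolynomial σ R} (hp : p ∈ N k) :
      p * X i ^ n ∈ N (k + n • d i) := by
    induction n with
    | zero => simpa using hp
    | succ n ih => simpa only [pow_succ, succ_nsmul, mul_assoc, add_assoc] using mul_X_mem _ i _ ih
  have monomial_mem (s : σ →₀ ℕ) : monomial s (1 : R) ∈ N (Finsupp.weight d s) := by
    induction s using Finsupp.induction₂ with
    | zero => simpa using one_mem
    | add_single i n s _ _ ih =>
      simpa only [monomial_add_single, map_add, Finsupp.weight_single] using mul_X_pow_mem _ i n ih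
  intro p hp
  induction hp using IsWeightedHomogeneous.induction_on with
  | zero => exact zero_mem _
  | add p q _ _ hp hq => exact add_mem hp hq
  | monomial s r hs =>
    subst hs
    simpa only [smul_monomial, smul_eq_mul, mul_one] using (N _).smul_mem r (monomial_mem s)

theorem weightedHomogeneousSubmodule_le_comap {A : Type*} [Semiring A] [Algebra R A]
    {𝒜 : ι → Submodule R A} [SetLike.GradedMonoid 𝒜] {φ : MvPolynomial σ R →ₐ[R] A}
    (hφ : ∀ i, φ (X i) ∈ 𝒜 (d i)) (k : ι) :
    weightedHomogeneousSubmodule R d k ≤ (𝒜 k).comap φ.toLinearMap := by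
  refine weightedHomogeneousSubmodule_le_of_mul_X_mem (N := fun k ↦ (𝒜 k).comap φ.toLinearMap)
    ?_ (fun k i p hp ↦ ?_) k
  · simpa using SetLike.GradedOne.one_mem (A := 𝒜)
  · simpa using SetLike.mul_mem_graded (A := 𝒜) hp (hφ i)

theorem surjective_of_adjoin_range_X_eq_top {A : Type*} [Semiring A] [Algebra R A]
    {φ : MvPolynomial σ R →ₐ[R] A} (hgen : Algebra.adjoin R (Set.range fun i ↦ φ (X i)) = ⊤) :
    Function.Surjective φ := by
  rw [← AlgHom.range_eq_top, eq_top_iff, ← hgen, Algebra.adjoin_le_iff]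
  rintro _ ⟨i, rfl⟩
  exact ⟨X i, rfl⟩

end WeightedHomogeneous

section Presentation

variable {K σ ι A : Type*} [CommRing K] [AddCommMonoid ι] [Ring A] [Algebra K A]

/-- The candidates `A_k` for basis elements of degree `k`: products of an element of some `B l` with
a generator `X i` such that `l + d i = k`. -/
def candidates (d : σ → ι) (B : ι → Set (MvPolynomial σ K)) (k : ι) : Set (MvPolynomial σ K) :=
  {z | ∃ (x : MvPolynomial σ K) (l : ι) (i : σ), x ∈ B l ∧ l + d i = k ∧ z = x * X i}

/-- The relations `F_k` rewriting each candidate outside `B k` in terms of `B k`. The linear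
combination `∑ λ_{k,i}(x) x_{k,i}` is encoded as an element `y` of the span of `B k` with the same
image as `x`. -/
noncomputable def rewritingRelations (φ : MvPolynomial σ K →ₐ[K] A) (d : σ → ι)
    (B : ι → Set (MvPolynomial σ K)) (k : ι) : Set (MvPolynomial σ K) :=
  {z | ∃ x ∈ candidates d B k, x ∉ B k ∧ ∃ y ∈ Submodule.span K (B k), φ x = φ y ∧ z = x - y}

/-- The ideal `I` generated by the rewriting relations. Degree `0` is included, so that generators
need not have positive degree. -/
noncomputable def relationIdeal (φ : MvPolynomial σ K →ₐ[K] A) (d : σ → ι)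
    (B : ι → Set (MvPolynomial σ K)) : Ideal (MvPolynomial σ K) :=
  Ideal.span {z | ∃ k, z ∈ rewritingRelations φ d B k}

/-- A family `B` obtained by the inductive construction: `B 0 = {1}`, and `B k` is a subset of the
candidates with linearly independent image. Maximality is encoded by the images of all candidates
lying in the span of the image of `B k`. -/
structure IsInductiveBasis (φ : MvPolynomial σ K →ₐ[K] A) (d : σ → ι)
    (B : ι → Set (MvPolynomial σ K)) : Prop where
  zero_eq : B 0 = {1}
  subset_candidates : ∀ k, k ≠ 0 → B k ⊆ candidates d B k
  linearIndependent : ∀ k, LinearIndependent K fun x : B k ↦ φ (x : MvPolynomial σ K)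
  map_mem_span : ∀ k, ∀ x ∈ candidates d B k, φ x ∈ Submodule.span K (φ '' B k)

variable {φ : MvPolynomial σ K →ₐ[K] A} {d : σ → ι} {B : ι → Set (MvPolynomial σ K)}

theorem relationIdeal_le_ker : relationIdeal φ d B ≤ RingHom.ker φ := by
  rw [relationIdeal, Ideal.span_le]
  rintro _ ⟨k, x, -, -, y, -, hxy, rfl⟩
  rw [SetLike.mem_coe, RingHom.mem_ker, map_sub, hxy, sub_self]

theorem relationIdeal_eq_span_of_pos [PartialOrder ι] [CanonicallyOrderedAdd ι]
    (hd : ∀ i, 0 < d i) :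
    relationIdeal φ d B = Ideal.span {z | ∃ k, 0 < k ∧ z ∈ rewritingRelations φ d B k} := by
  have pos_of_mem {k : ι} {z : MvPolynomial σ K} (hz : z ∈ rewritingRelations φ d B k) : 0 < k := by
    obtain ⟨_, ⟨_, l, i, _, rfl, _⟩, _⟩ := hz
    exact (hd i).trans_le le_add_self
  exact congrArg Ideal.span (Set.ext fun z ↦ exists_congr fun k ↦
    (and_iff_right_of_imp pos_of_mem).symm)

namespace IsInductiveBasis

variable (hB : IsInductiveBasis φ d B)
include hB

theorem isWeightedHomogeneous {k : ι} {x : MvPolynomial σ K} (hx : x ∈ B k) :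
    IsWeightedHomogeneous d x k := by
  induction h : x.totalDegree using Nat.strong_induction_on generalizing k x with
  | _ n ih =>
    subst h
    obtain rfl | hk := eq_or_ne k 0
    · rw [hB.zero_eq, Set.mem_singleton_iff] at hx
      exact hx ▸ isWeightedHomogeneous_one K d
    obtain ⟨y, l, i, hy, rfl, rfl⟩ := hB.subset_candidates k hk hx
    obtain rfl | hy0 := eq_or_ne y 0
    · rw [zero_mul]
      exact isWeightedHomogeneous_zero K d _
    · exact (ih _ (totalDegree_lt_totalDegree_mul_X hy0 i) hy rfl).mul
        (isWeightedHomogeneous_X K d i)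

theorem span_le_weightedHomogeneousSubmodule (k : ι) :
    Submodule.span K (B k) ≤ weightedHomogeneousSubmodule K d k :=
  Submodule.span_le.mpr fun _ hx ↦ hB.isWeightedHomogeneous hx

theorem disjoint_span_ker (k : ι) :
    Disjoint (Submodule.span K (B k)) (LinearMap.ker φ.toLinearMap) := by
  have h := Submodule.range_ker_disjoint (f := φ.toLinearMap) (v := ((↑) : B k → MvPolynomial σ K))
    (hB.linearIndependent k)
  rwa [Subtype.range_coe] at h

theorem candidates_subset_sup (k : ι) :
    candidates d B k ⊆ ((relationIdeal φ d B).restrictScalars K ⊔ Submodule.span K (B k) :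
      Submodule K (MvPolynomial σ K)) := by
  intro x hx
  by_cases hxB : x ∈ B k
  · exact Submodule.mem_sup_right (Submodule.subset_span hxB)
  obtain ⟨y, hy, hyx⟩ : φ x ∈ (Submodule.span K (B k)).map φ.toLinearMap := by
    rw [Submodule.map_span]
    exact hB.map_mem_span k x hx
  have hxy : x - y ∈ relationIdeal φ d B :=
    Ideal.subset_span ⟨k, x, hx, hxB, y, hy, hyx.symm, rfl⟩
  exact Submodule.mem_sup.mpr ⟨x - y, hxy, y, hy, sub_add_cancel x y⟩

theorem mul_X_mem_sup (k : ι) (i : σ) {p : MvPolynomial σ K}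
    (hp : p ∈ (relationIdeal φ d B).restrictScalars K ⊔ Submodule.span K (B k)) :
    p * X i ∈ (relationIdeal φ d B).restrictScalars K ⊔ Submodule.span K (B (k + d i)) := by
  set T := (relationIdeal φ d B).restrictScalars K ⊔ Submodule.span K (B (k + d i))
  suffices h : (relationIdeal φ d B).restrictScalars K ⊔ Submodule.span K (B k) ≤
      T.comap (LinearMap.mulRight K (X i)) from h hp
  refine sup_le (fun a ha ↦ ?_) (Submodule.span_le.mpr fun x hx ↦ ?_)
  · exact Submodule.mem_sup_left ((relationIdeal φ d B).mul_mem_right _ ha)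
  · exact hB.candidates_subset_sup _ ⟨x, k, i, hx, rfl, rfl⟩

theorem weightedHomogeneousSubmodule_le_sup (k : ι) :
    weightedHomogeneousSubmodule K d k ≤
      (relationIdeal φ d B).restrictScalars K ⊔ Submodule.span K (B k) := by
  refine weightedHomogeneousSubmodule_le_of_mul_X_mem
    (N := fun k ↦ (relationIdeal φ d B).restrictScalars K ⊔ Submodule.span K (B k))
    (Submodule.mem_sup_right (Submodule.subset_span ?_)) (fun k i _ ↦ hB.mul_X_mem_sup k i) k
  rw [hB.zero_eq, Set.mem_singleton_iff]

end IsInductiveBasis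

theorem graded_algebra_presentation_general [DecidableEq ι] (𝒜 : ι → Submodule K A)
    [GradedAlgebra 𝒜] (hφ : ∀ i, φ (X i) ∈ 𝒜 (d i))
    (hgen : Algebra.adjoin K (Set.range fun i ↦ φ (X i)) = ⊤) (hB : IsInductiveBasis φ d B) :
    RingHom.ker φ = relationIdeal φ d B ∧
    Function.Surjective φ ∧
    (∀ k, ∀ p ∈ weightedHomogeneousSubmodule K d k, φ p ∈ 𝒜 k) ∧
    (∀ k, Submodule.span K (φ '' B k) = 𝒜 k ∧
      LinearIndependent K (fun x : B k ↦ φ (x : MvPolynomial σ K))) := by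
  let _ := weightedDecomposition K d
  have hgraded := weightedHomogeneousSubmodule_le_comap hφ
  have hsurj := surjective_of_adjoin_range_X_eq_top hgen
  have hle : (relationIdeal φ d B).restrictScalars K ≤ LinearMap.ker φ.toLinearMap :=
    relationIdeal_le_ker
  have hsup := hB.weightedHomogeneousSubmodule_le_sup
  have hker := ker_eq_of_graded_piece_le_sup hgraded hle hsup hB.disjoint_span_ker
  refine ⟨SetLike.ext fun p ↦ SetLike.ext_iff.mp hker p, hsurj, hgraded,
    fun k ↦ ⟨?_, hB.linearIndependent k⟩⟩
  have hmap := map_eq_graded_piece_of_le_sup hgraded hsurj hle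
    (hB.span_le_weightedHomogeneousSubmodule k) (hsup k)
  rwa [Submodule.map_span] at hmap

end Presentation

/-- **Lemma 2.5.** Let `𝒜` be a commutative graded `K`-algebra generated by
homogeneous elements `ĝ₁,…,ĝ_m` of positive degrees `d₁,…,d_m`, and let
`φ : K[g₁,…,g_m] → 𝒜` be the graded morphism `g_i ↦ ĝ_i` (where `deg g_i = d_i`).
Given data `A', B, F` satisfying the inductive construction of the lemma (with `B_k` a
maximal subset of `A_k` whose image is linearly independent and `F_k` the set of resulting
correction elements), and `I` the ideal generated by `⋃_{k≥1} F_k`, the morphism descends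
to an isomorphism of graded algebras `R/I ≅ 𝒜` (i.e. `ker φ = I`, `φ` is surjective and
maps degree-`k` weighted-homogeneous polynomials into `𝒜_k`), and the image of `B_k` is a
`K`-basis of `𝒜_k`. -/
theorem graded_algebra_presentation
    (K : Type*) [Field K] (A : Type*) [CommRing A] [Algebra K A]
    (𝒜 : ℕ → Submodule K A) [GradedAlgebra 𝒜]
    (m : ℕ) (d : Fin m → ℕ) (hd : ∀ i, 0 < d i)
    (g : Fin m → A) (hgmem : ∀ i, g i ∈ 𝒜 (d i))
    (hgen : Algebra.adjoin K (Set.range g) = ⊤)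
    (φ : MvPolynomial (Fin m) K →ₐ[K] A) (hφ : ∀ i, φ (X i) = g i)
    (A' B F : ℕ → Set (MvPolynomial (Fin m) K))
    (hB0 : B 0 = {1})
    (hA' : ∀ k, A' k = {z | ∃ (x : MvPolynomial (Fin m) K) (l : ℕ) (i : Fin m),
      x ∈ B l ∧ l + d i = k ∧ z = x * X i})
    (hBsub : ∀ k, 1 ≤ k → B k ⊆ A' k)
    (hBli : ∀ k, LinearIndependent K (fun x : B k => φ (x : MvPolynomial (Fin m) K)))
    (hBmax : ∀ k, ∀ x ∈ A' k, φ x ∈ Submodule.span K (φ '' B k))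
    (hF : ∀ k, F k = {z | ∃ x ∈ A' k, x ∉ B k ∧ ∃ y ∈ Submodule.span K (B k),
      φ x = φ y ∧ z = x - y})
    (I : Ideal (MvPolynomial (Fin m) K))
    (hI : I = Ideal.span {z | ∃ k, 1 ≤ k ∧ z ∈ F k}) :
    RingHom.ker φ.toRingHom = I ∧
    Function.Surjective φ ∧
    (∀ k, ∀ p ∈ weightedHomogeneousSubmodule K d k, φ p ∈ 𝒜 k) ∧
    (∀ k, Submodule.span K (φ '' B k) = 𝒜 k ∧
      LinearIndependent K (fun x : B k => φ (x : MvPolynomial (Fin m) K))) := by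
  obtain rfl : (fun i ↦ φ (X i)) = g := funext hφ
  obtain rfl : A' = candidates d B := funext hA'
  obtain rfl : F = rewritingRelations φ d B := funext hF
  obtain rfl : I = relationIdeal φ d B := hI.trans (relationIdeal_eq_span_of_pos hd).symm
  exact graded_algebra_presentation_general 𝒜 hgmem hgen
    ⟨hB0, fun k hk ↦ hBsub k (Nat.one_le_iff_ne_zero.mpr hk), hBli, hBmax⟩
end
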